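/- arXiv:1208.3818 — 2 statements merged into one kernel-verified Lean document; each statement's English description precedes it below -/
import Mathlib

section
/- Let c_{α,β} ∈ ℂ be given for all multiindices α,β with |α|+|β| = 3 and set φ_3 := Σ_{|α|+|β|=3} (c_{α,β}/(α!β!)) z̄^α z^β. Define ψ_3^0 := i Σ_{|α|+|β|=3, (α'',β')≠(0,0)} ((⟨λ'',α''⟩+⟨λ',β'⟩)/(⟨|λ''|,α''⟩+⟨|λ'|,β'⟩)) · (c_{α,β}/(α!β!)) z̄^α z^β. Then T ψ_3^0 = − Σ_{j=1}^q 2λ_j z_j ∂φ_3/∂z_j − Σ_{j=q+1}^n 2λ_j z̄_j ∂φ_3/∂z̄_j. -/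
/-!
Statement 0: the action of the derivation
`T = Σ_{j≤q} 2i|λ_j| z_j ∂/∂z_j + Σ_{j>q} 2i|λ_j| z̄_j ∂/∂z̄_j`
on the polynomial ring over ℂ in the 4n formal variables
`z_1,…,z_n, z̄_1,…,z̄_n, w_1,…,w_n, w̄_1,…,w̄_n`, at the level of coefficients.
We encode the variables as `Fin 4 × Fin n`, where `(0,j) = z_j`, `(1,j) = z̄_j`,
`(2,j) = w_j`, `(3,j) = w̄_j`.
-/

open MvPolynomial

attribute [local instance] Classical.propDecidable

noncomputable section

abbrev Var (n : ℕ) := Fin 4 × Fin n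

def zV {n : ℕ} (j : Fin n) : Var n := (0, j)
def zbV {n : ℕ} (j : Fin n) : Var n := (1, j)
def wV {n : ℕ} (j : Fin n) : Var n := (2, j)
def wbV {n : ℕ} (j : Fin n) : Var n := (3, j)

/-- The derivation `T = Σ_{1≤j≤q} 2i|λ_j| z_j ∂/∂z_j + Σ_{q+1≤j≤n} 2i|λ_j| z̄_j ∂/∂z̄_j`. -/
def Tder {n : ℕ} (q : ℕ) (lam : Fin n → ℝ) (g : MvPolynomial (Var n) ℂ) :
    MvPolynomial (Var n) ℂ :=
  ∑ j : Fin n,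
    if (j : ℕ) < q then
      C (2 * Complex.I * ((|lam j| : ℝ) : ℂ)) * X (zV j) * pderiv (zV j) g
    else
      C (2 * Complex.I * ((|lam j| : ℝ) : ℂ)) * X (zbV j) * pderiv (zbV j) g

/-- The exponent function of the monomial `z̄^α z^β w̄^γ w^δ`. -/
def mIdx {n : ℕ} (α β γ δ : Fin n → ℕ) : Var n →₀ ℕ :=
  Finsupp.equivFunOnFinite.symm fun v =>
    if v.1 = 0 then β v.2
    else if v.1 = 1 then α v.2
    else if v.1 = 2 then δ v.2
    else γ v.2

/-- The condition `(α'', β') = (0,0)`. -/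
def cond0 {n : ℕ} (q : ℕ) (α β : Fin n → ℕ) : Prop :=
  ∀ j : Fin n, (q ≤ (j : ℕ) → α j = 0) ∧ ((j : ℕ) < q → β j = 0)

/-- `⟨|λ''|, α''⟩ + ⟨|λ'|, β'⟩`. -/
def wgt {n : ℕ} (q : ℕ) (lam : Fin n → ℝ) (α β : Fin n → ℕ) : ℝ :=
  ∑ j : Fin n, if (j : ℕ) < q then |lam j| * β j else |lam j| * α j

/-- `⟨λ'', α''⟩ + ⟨λ', β'⟩` (signed weight). -/
def swgt {n : ℕ} (q : ℕ) (lam : Fin n → ℝ) (α β : Fin n → ℕ) : ℝ :=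
  ∑ j : Fin n, if (j : ℕ) < q then lam j * β j else lam j * α j

/-- `α! = α_1! ⋯ α_n!`. -/
def factM {n : ℕ} (α : Fin n → ℕ) : ℕ := ∏ j : Fin n, (α j).factorial

lemma coeff_X_mul_pd {σ : Type*} (v : σ) (m : σ →₀ ℕ) (g : MvPolynomial σ ℂ) :
    coeff m (X v * pderiv v g) = (m v : ℂ) * coeff m g := by
  classical
  induction g using MvPolynomial.induction_on' with
  | monomial s a =>
    rw [pderiv_monomial, X, monomial_mul, one_mul, coeff_monomial, coeff_monomial]
    by_cases h0 : s v = 0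
    · by_cases hs : s = m
      · subst hs; simp [h0]
      · simp [h0, hs]
    · have : Finsupp.single v 1 + (s - Finsupp.single v 1) = s := by
        apply add_tsub_cancel_of_le
        rw [Finsupp.single_le_iff]; omega
      rw [this]
      by_cases hs : s = m
      · subst hs; simp [mul_comm]
      · simp [hs]
  | add p r hp hr => simp only [map_add, mul_add, coeff_add, hp, hr]

lemma mIdx_surj {n : ℕ} (m : Var n →₀ ℕ) : ∃ α β γ δ, m = mIdx α β γ δ := by
  refine ⟨fun j => m (1, j), fun j => m (0, j), fun j => m (3, j), fun j => m (2, j), ?_⟩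
  ext ⟨a, j⟩
  fin_cases a <;> simp [mIdx]

lemma mIdx_z {n : ℕ} (α β γ δ : Fin n → ℕ) (j : Fin n) : mIdx α β γ δ (zV j) = β j := by
  simp [mIdx, zV]

lemma mIdx_zb {n : ℕ} (α β γ δ : Fin n → ℕ) (j : Fin n) : mIdx α β γ δ (zbV j) = α j := by
  simp [mIdx, zbV]

lemma coeff_gen {n : ℕ} (q : ℕ) (a : Fin n → ℂ) (α β γ δ : Fin n → ℕ)
    (g : MvPolynomial (Var n) ℂ) :
    coeff (mIdx α β γ δ) (∑ j : Fin n, if (j : ℕ) < q then C (a j) * X (zV j) * pderiv (zV j) g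
      else C (a j) * X (zbV j) * pderiv (zbV j) g) =
    (∑ j : Fin n, if (j : ℕ) < q then a j * β j else a j * α j) * coeff (mIdx α β γ δ) g := by
  rw [coeff_sum, Finset.sum_mul]
  refine Finset.sum_congr rfl fun j _ => ?_
  split_ifs
  · rw [mul_assoc, coeff_C_mul, coeff_X_mul_pd, mIdx_z, mul_assoc]
  · rw [mul_assoc, coeff_C_mul, coeff_X_mul_pd, mIdx_zb, mul_assoc]

/-- with `φ₃ = Σ_{|α|+|β|=3} (c_{α,β}/(α!β!)) z̄^α z^β` and
`ψ₃⁰ = i Σ_{|α|+|β|=3, (α'',β')≠0} ((⟨λ'',α''⟩+⟨λ',β'⟩)/(⟨|λ''|,α''⟩+⟨|λ'|,β'⟩))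
(c_{α,β}/(α!β!)) z̄^α z^β` (both described through their coefficients), one has
`T ψ₃⁰ = − Σ_{j≤q} 2λ_j z_j ∂φ₃/∂z_j − Σ_{j>q} 2λ_j z̄_j ∂φ₃/∂z̄_j`. -/
theorem statement2 (n q : ℕ) (hn : 1 ≤ n) (hq : q ≤ n) (lam : Fin n → ℝ)
    (hneg : ∀ j : Fin n, (j : ℕ) < q → lam j < 0)
    (hpos : ∀ j : Fin n, q ≤ (j : ℕ) → 0 < lam j)
    (c : (Fin n → ℕ) → (Fin n → ℕ) → ℂ)
    (φ₃ ψ₃₀ : MvPolynomial (Var n) ℂ)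
    (hφ : ∀ α β γ δ : Fin n → ℕ,
      coeff (mIdx α β γ δ) φ₃ =
        if (∑ j, α j) + (∑ j, β j) = 3 ∧ γ = 0 ∧ δ = 0 then
          c α β / ((factM α * factM β : ℕ) : ℂ)
        else 0)
    (hψ : ∀ α β γ δ : Fin n → ℕ,
      coeff (mIdx α β γ δ) ψ₃₀ =
        if (∑ j, α j) + (∑ j, β j) = 3 ∧ γ = 0 ∧ δ = 0 ∧ ¬ cond0 q α β then
          Complex.I * ((swgt q lam α β / wgt q lam α β : ℝ) : ℂ) *
            (c α β / ((factM α * factM β : ℕ) : ℂ))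
        else 0) :
    Tder q lam ψ₃₀ =
      - ∑ j : Fin n,
          (if (j : ℕ) < q then
            C ((2 * lam j : ℝ) : ℂ) * X (zV j) * pderiv (zV j) φ₃
          else
            C ((2 * lam j : ℝ) : ℂ) * X (zbV j) * pderiv (zbV j) φ₃) := by
  ext m
  obtain ⟨α, β, γ, δ, rfl⟩ := mIdx_surj m
  rw [Tder, coeff_neg, coeff_gen, coeff_gen, hφ, hψ]
  have h1 : (∑ j : Fin n, if (j : ℕ) < q then 2 * Complex.I * ((|lam j| : ℝ) : ℂ) * β j
      else 2 * Complex.I * ((|lam j| : ℝ) : ℂ) * α j) = 2 * Complex.I * (wgt q lam α β : ℂ) := by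
    rw [wgt, Complex.ofReal_sum, Finset.mul_sum]
    refine Finset.sum_congr rfl fun j _ => ?_
    split_ifs <;> push_cast <;> ring
  have h2 : (∑ j : Fin n, if (j : ℕ) < q then ((2 * lam j : ℝ) : ℂ) * β j
      else ((2 * lam j : ℝ) : ℂ) * α j) = 2 * (swgt q lam α β : ℂ) := by
    rw [swgt, Complex.ofReal_sum, Finset.mul_sum]
    refine Finset.sum_congr rfl fun j _ => ?_
    split_ifs <;> push_cast <;> ring
  rw [h1, h2]
  by_cases hc : cond0 q α β
  · have hs : swgt q lam α β = 0 := by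
      refine Finset.sum_eq_zero fun j _ => ?_
      split_ifs with h
      · simp [(hc j).2 h]
      · simp [(hc j).1 (not_lt.mp h)]
    simp [hc, hs]
  · have hw : wgt q lam α β ≠ 0 := by
      intro h
      apply hc
      have h3 := (Finset.sum_eq_zero_iff_of_nonneg (fun j _ => by
        split_ifs <;> positivity)).mp h
      intro j
      have h4 := h3 j (Finset.mem_univ j)
      constructor
      · intro hj
        have := (hpos j hj).ne'
        simpa [not_lt.mpr hj, this] using h4
      · intro hj
        have := (hneg j hj).ne
        simpa [hj, this] using h4
    have hw' : (wgt q lam α β : ℂ) ≠ 0 := by exact_mod_cast hw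
    by_cases h : (∑ j, α j) + (∑ j, β j) = 3 ∧ γ = 0 ∧ δ = 0
    · rw [if_pos h, if_pos ⟨h.1, h.2.1, h.2.2, hc⟩]
      push_cast
      generalize c α β / _ = d
      field_simp
      rw [Complex.I_sq]
      ring
    · rw [if_neg h, if_neg (fun h' => h ⟨h'.1, h'.2.1, h'.2.2.1⟩)]
      simp
end
end

section
/- There exists a function R(z,w) which is a homogeneous polynomial of degree 3 in z_1,…,z_n, their complex conjugates, w_1,…,w_n and their complex conjugates, each of whose monomials z̄^α z^β w̄^γ w^δ satisfies (α'',β') = (0,0), such that ψ(z,w) − E(z,w) − R(z,w) = O(|(z,w)|^4) as (z,w) → (0,0), where E(z,w) := i Σ_{j=1}^n |λ_j||z_j−w_j|^2 + i Σ_{j=1}^n λ_j(z̄_j w_j − w̄_j z_j) + i Σ_{|α|+|β|=3, (α'',β')≠(0,0)} [(⟨λ'',α''⟩+⟨λ',β'⟩)/(⟨|λ''|,α''⟩+⟨|λ'|,β'⟩)] (∂^3φ/∂z̄^α∂z^β(0)) z̄^α z^β/(α!β!) + i Σ_{j=1}^q Σ_{|α|+|β|=2, α''≠0} (∂^3φ/∂z̄^α∂z^β∂z_j(0)/(α!β!))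 [2|λ_j|⟨|λ''|,α''⟩/((⟨|λ''|,α''⟩+⟨|λ'|,β'⟩)(⟨|λ''|,α''⟩+⟨|λ'|,β'⟩+|λ_j|))] z̄^α z^β w_j − i Σ_{j=q+1}^n Σ_{|α|+|β|=2, β'≠0} (∂^3φ/∂z̄^α∂z^β∂z̄_j(0)/(α!β!)) [2|λ_j|⟨|λ'|,β'⟩/((⟨|λ''|,α''⟩+⟨|λ'|,β'⟩)(⟨|λ''|,α''⟩+⟨|λ'|,β'⟩+|λ_j|))] z̄^α z^β w̄_j + i Σ_{q+1≤k≤n, 1≤j,s≤q} (∂^3φ/∂z̄_k∂z_j∂z_s(0)) [|λ_j||λ_s|/(|λ_k|+|λ_j|+|λ_s|)](1/(|λ_j|+|λ_k|)+1/(|λ_k|+|λ_s|)) z̄_k w_j w_s − i Σ_{1≤k≤q, q+1≤j,s≤n} (∂^3φ/∂z_k∂z̄_j∂z̄_s(0)) [|λ_j||λ_s|/(|λ_k|+|λ_j|+|λ_s|)](1/(|λ_j|+|λ_k|)+1/(|λ_k|+|λ_s|)) z_k w̄_j w̄_s + i Σ_{q+1≤s,k≤n, 1≤j≤q} (∂^3φ/∂z̄_s∂z_j∂z̄_k(0))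 [2|λ_j||λ_k|/((|λ_s|+|λ_j|)(|λ_s|+|λ_j|+|λ_k|))] z̄_s w̄_k w_j − i Σ_{q+1≤k≤n, 1≤j,s≤q} (∂^3φ/∂z_s∂z_j∂z̄_k(0)) [2|λ_j||λ_k|/((|λ_s|+|λ_k|)(|λ_s|+|λ_j|+|λ_k|))] z_s w̄_k w_j. -/
open Complex Asymptotics

attribute [local instance] Classical.propDecidable

noncomputable section

/-- `ℂⁿ` as `Fin n → ℂ`. -/
abbrev Cn (n : ℕ) := Fin n → ℂ

/-- Wirtinger derivative `∂/∂z_j = (1/2)(∂/∂x_{2j-1} − i ∂/∂x_{2j})`. -/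
def wd {n : ℕ} (j : Fin n) (f : Cn n → ℂ) : Cn n → ℂ := fun z =>
  (1 / 2 : ℂ) *
    (fderiv ℝ f z (Pi.single j 1) - Complex.I * fderiv ℝ f z (Pi.single j Complex.I))

/-- Wirtinger derivative `∂/∂z̄_j = (1/2)(∂/∂x_{2j-1} + i ∂/∂x_{2j})`. -/
def wdb {n : ℕ} (j : Fin n) (f : Cn n → ℂ) : Cn n → ℂ := fun z =>
  (1 / 2 : ℂ) *
    (fderiv ℝ f z (Pi.single j 1) + Complex.I * fderiv ℝ f z (Pi.single j Complex.I))

/-- A real-valued function regarded as complex-valued. -/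
def cplx {n : ℕ} (φ : Cn n → ℝ) : Cn n → ℂ := fun z => (φ z : ℂ)

/-- `φ` is smooth and `φ(z) = Σ_j λ_j |z_j|² + O(|z|³)` as `z → 0`. -/
def PhiOK {n : ℕ} (lam : Fin n → ℝ) (φ : Cn n → ℝ) : Prop :=
  ContDiff ℝ (⊤ : ℕ∞) φ ∧
    (fun z : Cn n => φ z - ∑ j, lam j * Complex.normSq (z j)) =O[nhds 0] fun z => ‖z‖ ^ 3

/-- The conditions (a)–(e) on the phase function `ψ`. -/
def Admissible {n : ℕ} (lam : Fin n → ℝ) (φ : Cn n → ℝ) (ψ : Cn n → Cn n → ℂ) : Prop :=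
  ContDiff ℝ (⊤ : ℕ∞) (fun p : Cn n × Cn n => ψ p.1 p.2) ∧
  -- (a)
  (∀ z, ψ z z = 0) ∧
  (∀ z w, ψ z w = - (starRingEnd ℂ) (ψ w z)) ∧
  -- (b)
  (∃ c : ℝ, 0 < c ∧ ∀ z w, c * ‖z - w‖ ^ 2 ≤ (ψ z w).im) ∧
  -- (c): on the diagonal, ∂ψ/∂z̄_j = i ∂φ/∂z̄_j, ∂ψ/∂z_j = −i ∂φ/∂z_j,
  --      ∂ψ/∂w̄_j = −i ∂φ/∂z̄_j, ∂ψ/∂w_j = i ∂φ/∂z_j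
  (∀ (z : Cn n) (j : Fin n), wdb j (fun x => ψ x z) z = Complex.I * wdb j (cplx φ) z) ∧
  (∀ (z : Cn n) (j : Fin n), wd j (fun x => ψ x z) z = - Complex.I * wd j (cplx φ) z) ∧
  (∀ (z : Cn n) (j : Fin n), wdb j (fun w => ψ z w) z = - Complex.I * wdb j (cplx φ) z) ∧
  (∀ (z : Cn n) (j : Fin n), wd j (fun w => ψ z w) z = Complex.I * wd j (cplx φ) z) ∧
  -- (d): Σ_j (i ∂ψ/∂z̄_j + ∂φ/∂z̄_j)(−i ∂ψ/∂z_j + ∂φ/∂z_j) vanishes to infinite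
  --      order on the diagonal
  (∀ (m : ℕ) (z : Cn n),
    iteratedFDeriv ℝ m
      (fun p : Cn n × Cn n =>
        ∑ j, (Complex.I * wdb j (fun x => ψ x p.2) p.1 + wdb j (cplx φ) p.1) *
             (- Complex.I * wd j (fun x => ψ x p.2) p.1 + wd j (cplx φ) p.1))
      (z, z) = 0) ∧
  -- (e)
  ((fun p : Cn n × Cn n =>
      ψ p.1 p.2 -
        (Complex.I * ∑ j, ((|lam j| * Complex.normSq (p.1 j - p.2 j) : ℝ) : ℂ)
          + Complex.I * ∑ j, ((lam j : ℝ) : ℂ) *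
              ((starRingEnd ℂ) (p.1 j) * p.2 j - (starRingEnd ℂ) (p.2 j) * p.1 j)))
    =O[nhds 0] fun p => ‖p‖ ^ 3)
/-- Directional Wirtinger operator: `inl j ↦ ∂/∂z̄_j`, `inr j ↦ ∂/∂z_j`. -/
def Dv {n : ℕ} : Fin n ⊕ Fin n → (Cn n → ℂ) → Cn n → ℂ
  | Sum.inl j => wdb j
  | Sum.inr j => wd j

/-- The variable attached to an index: `inl j ↦ z̄_j`, `inr j ↦ z_j`. -/
def Mv {n : ℕ} (v : Fin n ⊕ Fin n) (z : Cn n) : ℂ :=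
  match v with
  | Sum.inl j => (starRingEnd ℂ) (z j)
  | Sum.inr j => z j

/-- `α` for a triple of variable indices. -/
def aOf3 {n : ℕ} (v₁ v₂ v₃ : Fin n ⊕ Fin n) : Fin n → ℕ := fun j =>
  (if v₁ = Sum.inl j then 1 else 0) + (if v₂ = Sum.inl j then 1 else 0) +
    (if v₃ = Sum.inl j then 1 else 0)

/-- `β` for a triple of variable indices. -/
def bOf3 {n : ℕ} (v₁ v₂ v₃ : Fin n ⊕ Fin n) : Fin n → ℕ := fun j =>
  (if v₁ = Sum.inr j then 1 else 0) + (if v₂ = Sum.inr j then 1 else 0) +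
    (if v₃ = Sum.inr j then 1 else 0)

/-- `α` for a pair of variable indices. -/
def aOf2 {n : ℕ} (v₁ v₂ : Fin n ⊕ Fin n) : Fin n → ℕ := fun j =>
  (if v₁ = Sum.inl j then 1 else 0) + (if v₂ = Sum.inl j then 1 else 0)

/-- `β` for a pair of variable indices. -/
def bOf2 {n : ℕ} (v₁ v₂ : Fin n ⊕ Fin n) : Fin n → ℕ := fun j =>
  (if v₁ = Sum.inr j then 1 else 0) + (if v₂ = Sum.inr j then 1 else 0)

/-- `⟨|λ''|, α''⟩`. -/
def wA {n : ℕ} (q : ℕ) (lam : Fin n → ℝ) (α : Fin n → ℕ) : ℝ :=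
  ∑ j : Fin n, if q ≤ (j : ℕ) then |lam j| * α j else 0

/-- `⟨|λ'|, β'⟩`. -/
def wB {n : ℕ} (q : ℕ) (lam : Fin n → ℝ) (β : Fin n → ℕ) : ℝ :=
  ∑ j : Fin n, if (j : ℕ) < q then |lam j| * β j else 0

/-- The explicit expansion `E(z,w)` of Statement 5.  Sums over multiindices with
`|α|+|β| = d` are written as `1/d!` times sums over ordered `d`-tuples of variables
(using that mixed partials of the smooth function `φ` commute, and that a multiindex
`(α,β)` is represented by exactly `d!/(α!β!)` ordered tuples). -/
def E5 {n : ℕ} (q : ℕ) (lam : Fin n → ℝ) (φ : Cn n → ℝ) (z w : Cn n) : ℂ :=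
  Complex.I * ∑ j, ((|lam j| * Complex.normSq (z j - w j) : ℝ) : ℂ)
  + Complex.I * ∑ j, ((lam j : ℝ) : ℂ) *
      ((starRingEnd ℂ) (z j) * w j - (starRingEnd ℂ) (w j) * z j)
  + (Complex.I / 6) *
      ∑ v₁ : Fin n ⊕ Fin n, ∑ v₂ : Fin n ⊕ Fin n, ∑ v₃ : Fin n ⊕ Fin n,
        (if ¬ cond0 q (aOf3 v₁ v₂ v₃) (bOf3 v₁ v₂ v₃) then
          ((swgt q lam (aOf3 v₁ v₂ v₃) (bOf3 v₁ v₂ v₃) /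
              (wA q lam (aOf3 v₁ v₂ v₃) + wB q lam (bOf3 v₁ v₂ v₃)) : ℝ) : ℂ)
        else 0) *
          Dv v₁ (Dv v₂ (Dv v₃ (cplx φ))) 0 * Mv v₁ z * Mv v₂ z * Mv v₃ z
  + (Complex.I / 2) *
      ∑ j : Fin n, ∑ v₁ : Fin n ⊕ Fin n, ∑ v₂ : Fin n ⊕ Fin n,
        (if (j : ℕ) < q ∧ ¬ (∀ t : Fin n, q ≤ (t : ℕ) → aOf2 v₁ v₂ t = 0) then
          ((2 * |lam j| * wA q lam (aOf2 v₁ v₂) /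
              ((wA q lam (aOf2 v₁ v₂) + wB q lam (bOf2 v₁ v₂)) *
               (wA q lam (aOf2 v₁ v₂) + wB q lam (bOf2 v₁ v₂) + |lam j|)) : ℝ) : ℂ)
        else 0) *
          Dv v₁ (Dv v₂ (wd j (cplx φ))) 0 * Mv v₁ z * Mv v₂ z * w j
  - (Complex.I / 2) *
      ∑ j : Fin n, ∑ v₁ : Fin n ⊕ Fin n, ∑ v₂ : Fin n ⊕ Fin n,
        (if q ≤ (j : ℕ) ∧ ¬ (∀ t : Fin n, (t : ℕ) < q → bOf2 v₁ v₂ t = 0) then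
          ((2 * |lam j| * wB q lam (bOf2 v₁ v₂) /
              ((wA q lam (aOf2 v₁ v₂) + wB q lam (bOf2 v₁ v₂)) *
               (wA q lam (aOf2 v₁ v₂) + wB q lam (bOf2 v₁ v₂) + |lam j|)) : ℝ) : ℂ)
        else 0) *
          Dv v₁ (Dv v₂ (wdb j (cplx φ))) 0 * Mv v₁ z * Mv v₂ z * (starRingEnd ℂ) (w j)
  + Complex.I *
      ∑ k : Fin n, ∑ j : Fin n, ∑ s : Fin n,
        (if q ≤ (k : ℕ) ∧ (j : ℕ) < q ∧ (s : ℕ) < q then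
          ((|lam j| * |lam s| / (|lam k| + |lam j| + |lam s|) *
              (1 / (|lam j| + |lam k|) + 1 / (|lam k| + |lam s|)) : ℝ) : ℂ) *
            wdb k (wd j (wd s (cplx φ))) 0 * (starRingEnd ℂ) (z k) * w j * w s
        else 0)
  - Complex.I *
      ∑ k : Fin n, ∑ j : Fin n, ∑ s : Fin n,
        (if (k : ℕ) < q ∧ q ≤ (j : ℕ) ∧ q ≤ (s : ℕ) then
          ((|lam j| * |lam s| / (|lam k| + |lam j| + |lam s|) *
              (1 / (|lam j| + |lam k|) + 1 / (|lam k| + |lam s|)) : ℝ) : ℂ) *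
            wd k (wdb j (wdb s (cplx φ))) 0 * z k * (starRingEnd ℂ) (w j) *
              (starRingEnd ℂ) (w s)
        else 0)
  + Complex.I *
      ∑ s : Fin n, ∑ k : Fin n, ∑ j : Fin n,
        (if q ≤ (s : ℕ) ∧ q ≤ (k : ℕ) ∧ (j : ℕ) < q then
          ((2 * |lam j| * |lam k| /
              ((|lam s| + |lam j|) * (|lam s| + |lam j| + |lam k|)) : ℝ) : ℂ) *
            wdb s (wd j (wdb k (cplx φ))) 0 * (starRingEnd ℂ) (z s) *
              (starRingEnd ℂ) (w k) * w j
        else 0)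
  - Complex.I *
      ∑ k : Fin n, ∑ j : Fin n, ∑ s : Fin n,
        (if q ≤ (k : ℕ) ∧ (j : ℕ) < q ∧ (s : ℕ) < q then
          ((2 * |lam j| * |lam k| /
              ((|lam s| + |lam k|) * (|lam s| + |lam j| + |lam k|)) : ℝ) : ℂ) *
            wd s (wd j (wdb k (cplx φ))) 0 * z s * (starRingEnd ℂ) (w k) * w j
        else 0)

/-- Evaluation of the formal variables at the point `(z,w)`. -/
def evalVars {n : ℕ} (z w : Cn n) : Var n → ℂ := fun v =>
  if v.1 = 0 then z v.2
  else if v.1 = 1 then (starRingEnd ℂ) (z v.2)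
  else if v.1 = 2 then w v.2
  else (starRingEnd ℂ) (w v.2)


abbrev EE (n : ℕ) := Cn n × Cn n

abbrev Sm {n : ℕ} (f : EE n → ℂ) : Prop := ContDiff ℝ (⊤ : ℕ∞) f

def dirV {n : ℕ} (x : Var n) (c : ℂ) : EE n :=
  if x.1 = 0 ∨ x.1 = 1 then (Pi.single x.2 c, 0) else (0, Pi.single x.2 c)

def sgV {n : ℕ} (x : Var n) : ℂ := if x.1 = 0 ∨ x.1 = 2 then -Complex.I else Complex.I

def LV {n : ℕ} (x : Var n) : (EE n →L[ℝ] ℂ) →L[ℝ] ℂ :=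
  (1 / 2 : ℂ) • (ContinuousLinearMap.apply ℝ ℂ (dirV x 1)
    + sgV x • ContinuousLinearMap.apply ℝ ℂ (dirV x Complex.I))

lemma LV_apply {n : ℕ} (x : Var n) (T : EE n →L[ℝ] ℂ) :
    LV x T = (1 / 2 : ℂ) * (T (dirV x 1) + sgV x * T (dirV x Complex.I)) := by
  simp [LV]
  ring

def DD {n : ℕ} (x : Var n) (f : EE n → ℂ) : EE n → ℂ := fun p => LV x (fderiv ℝ f p)

lemma Sm.diff {n : ℕ} {f : EE n → ℂ} (hf : Sm f) : Differentiable ℝ f :=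
  hf.differentiable (by simp)

lemma Sm.fd {n : ℕ} {f : EE n → ℂ} (hf : Sm f) : ContDiff ℝ (⊤ : ℕ∞) (fderiv ℝ f) :=
  hf.fderiv_right (m := (⊤ : ℕ∞)) (by simp)

lemma Sm.DD {n : ℕ} {f : EE n → ℂ} (hf : Sm f) (x : Var n) : Sm (DD x f) :=
  (LV x).contDiff.comp hf.fd

lemma DD_add {n : ℕ} {f g : EE n → ℂ} (hf : Sm f) (hg : Sm g) (x : Var n) :
    DD x (fun p => f p + g p) = fun p => DD x f p + DD x g p := by
  funext p
  simp only [DD]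
  rw [fderiv_fun_add (hf.diff p) (hg.diff p), map_add]

lemma DD_sub {n : ℕ} {f g : EE n → ℂ} (hf : Sm f) (hg : Sm g) (x : Var n) :
    DD x (fun p => f p - g p) = fun p => DD x f p - DD x g p := by
  funext p
  simp only [DD]
  rw [fderiv_fun_sub (hf.diff p) (hg.diff p), map_sub]

lemma DD_mul {n : ℕ} {f g : EE n → ℂ} (hf : Sm f) (hg : Sm g) (x : Var n) :
    DD x (fun p => f p * g p) = fun p => DD x f p * g p + f p * DD x g p := by
  funext p
  simp only [DD]
  rw [fderiv_fun_mul (hf.diff p) (hg.diff p)]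
  simp only [LV_apply]
  simp
  ring

lemma DD_const {n : ℕ} (c : ℂ) (x : Var n) :
    DD x (fun _ : EE n => c) = fun _ => 0 := by
  funext p
  simp [DD]

lemma DD_cmul {n : ℕ} {f : EE n → ℂ} (hf : Sm f) (c : ℂ) (x : Var n) :
    DD x (fun p => c * f p) = fun p => c * DD x f p := by
  rw [DD_mul contDiff_const hf, DD_const]
  simp

lemma DD_sum {n : ℕ} {ι : Type*} (s : Finset ι) {f : ι → EE n → ℂ} (hf : ∀ i, Sm (f i))
    (x : Var n) :
    DD x (fun p => ∑ i ∈ s, f i p) = fun p => ∑ i ∈ s, DD x (f i) p := by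
  funext p
  simp only [DD]
  rw [fderiv_fun_sum (fun i _ => (hf i).diff p), map_sum]

lemma DD_comm {n : ℕ} {f : EE n → ℂ} (hf : Sm f) (x y : Var n) :
    DD x (DD y f) = DD y (DD x f) := by
  funext p
  have key : ∀ z : Var n, fderiv ℝ (DD z f) p = (LV z).comp (fderiv ℝ (fderiv ℝ f) p) := by
    intro z
    have h := (LV z).hasFDerivAt (x := fderiv ℝ f p)
    have h2 := (hf.fd.differentiable (by simp) p).hasFDerivAt
    exact (h.comp p h2).fderiv
  have hs : IsSymmSndFDerivAt ℝ f p := hf.contDiffAt.isSymmSndFDerivAt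
    (by rw [minSmoothness_of_isRCLikeNormedField]; exact WithTop.coe_le_coe.2 le_top)
  show LV x (fderiv ℝ (DD y f) p) = LV y (fderiv ℝ (DD x f) p)
  rw [key, key]
  simp only [LV_apply, ContinuousLinearMap.comp_apply]
  rw [hs (dirV x 1) (dirV y 1), hs (dirV x 1) (dirV y I), hs (dirV x I) (dirV y 1),
    hs (dirV x I) (dirV y I)]
  ring

lemma DD_flat {n : ℕ} {f : EE n → ℂ} (hf : Sm f) (x : Var n)
    (h : ∀ m : ℕ, iteratedFDeriv ℝ m f 0 = 0) (m : ℕ) : iteratedFDeriv ℝ m (DD x f) 0 = 0 := by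
  have h1 : iteratedFDeriv ℝ m (fderiv ℝ f) 0 = 0 := by
    rw [← norm_eq_zero, norm_iteratedFDeriv_fderiv, h, norm_zero]
  have h2 := (LV x).iteratedFDeriv_comp_left (f := fderiv ℝ f) (x := 0) (i := m)
    (hf.fd.contDiffAt) (by exact_mod_cast le_top)
  have h3 : DD x f = (LV x) ∘ (fderiv ℝ f) := rfl
  rw [h3, h2, h1]
  ext
  simp

lemma flat3 {n : ℕ} {f : EE n → ℂ} (hf : Sm f)
    (h : ∀ m : ℕ, iteratedFDeriv ℝ m f 0 = 0) (x y z : Var n) :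
    DD x (DD y (DD z f)) 0 = 0 := by
  have := DD_flat ((hf.DD z).DD y) x (DD_flat (hf.DD z) y (DD_flat hf z h)) 0
  have h2 := congrArg (fun T => T (fun _ => 0)) this
  simpa using h2

/-- evaluation of polynomials -/
def fn {n : ℕ} (P : MvPolynomial (Var n) ℂ) : EE n → ℂ :=
  fun p => MvPolynomial.eval (evalVars p.1 p.2) P

def cr {n : ℕ} (x : Var n) : EE n → ℂ := fun p => evalVars p.1 p.2 x

def crL {n : ℕ} (x : Var n) : EE n →L[ℝ] ℂ :=
  if x.1 = 0 then (ContinuousLinearMap.proj x.2).comp (ContinuousLinearMap.fst ℝ (Cn n) (Cn n))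
  else if x.1 = 1 then (conjCLE : ℂ →L[ℝ] ℂ).comp
    ((ContinuousLinearMap.proj x.2).comp (ContinuousLinearMap.fst ℝ (Cn n) (Cn n)))
  else if x.1 = 2 then
    (ContinuousLinearMap.proj x.2).comp (ContinuousLinearMap.snd ℝ (Cn n) (Cn n))
  else (conjCLE : ℂ →L[ℝ] ℂ).comp
    ((ContinuousLinearMap.proj x.2).comp (ContinuousLinearMap.snd ℝ (Cn n) (Cn n)))

lemma crL_apply {n : ℕ} (x : Var n) (p : EE n) : crL x p = cr x p := by
  simp only [crL, cr, evalVars]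
  split_ifs <;> simp

lemma cr_eq {n : ℕ} (x : Var n) : cr x = (crL x : EE n → ℂ) := by
  funext p; rw [crL_apply]

lemma Sm_cr {n : ℕ} (x : Var n) : Sm (cr x) := by
  rw [cr_eq]; exact (crL x).contDiff

lemma DD_cr {n : ℕ} (x y : Var n) : DD x (cr y) = fun _ => if x = y then 1 else 0 := by
  funext p
  simp only [DD, LV_apply]
  rw [cr_eq, ContinuousLinearMap.fderiv]
  simp only [crL_apply]
  obtain ⟨a, i⟩ := x
  obtain ⟨b, j⟩ := y
  by_cases hij : i = j
  · subst hij
    fin_cases a <;> fin_cases b <;> simp [cr, evalVars, dirV, sgV] <;> norm_num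
  · fin_cases a <;> fin_cases b <;> simp [cr, evalVars, dirV, sgV, hij, Ne.symm hij]

lemma fderiv_decomp {n : ℕ} (T : EE n →L[ℝ] ℂ) (v : EE n) :
    T v = ∑ x : Var n, LV x T * cr x v := by
  have h1 : ∀ (j : Fin n) (k : ℂ → EE n) (c : ℂ), (∀ a b : ℝ, k (a + b * I) = a • k 1 + b • k I) →
      T (k c) = (1/2 : ℂ) * (T (k 1) + -I * T (k I)) * c
        + (1/2 : ℂ) * (T (k 1) + I * T (k I)) * (starRingEnd ℂ) c := by
    intro j k c hk
    have := hk c.re c.im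
    rw [re_add_im] at this
    rw [this, map_add, map_smul, map_smul]
    have hc : (starRingEnd ℂ) c = c.re - c.im * I := by
      apply Complex.ext <;> simp
    rw [hc]
    obtain ⟨a, b⟩ := c
    have hab : (⟨a, b⟩ : ℂ) = a + b * I := by apply Complex.ext <;> simp
    simp only [real_smul]
    rw [hab]
    linear_combination ((b : ℂ) * T (k I)) * I_mul_I
  have h2 : v = ∑ j : Fin n, ((Pi.single j (v.1 j), 0) : EE n)
      + ∑ j : Fin n, ((0, Pi.single j (v.2 j)) : EE n) := by
    ext i
    · simp [Prod.fst_sum, Finset.sum_apply, Pi.single_apply]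
    · simp [Prod.snd_sum, Finset.sum_apply, Pi.single_apply]
  conv_lhs => rw [h2]
  rw [map_add, map_sum, map_sum, Fintype.sum_prod_type]
  rw [Fin.sum_univ_four, add_assoc, ← Finset.sum_add_distrib (f := fun y => LV (0, y) T * cr (0, y) v),
    ← Finset.sum_add_distrib (f := fun y => LV (2, y) T * cr (2, y) v)]
  congr 1
  · refine Finset.sum_congr rfl fun j _ => ?_
    rw [h1 j (fun c => (Pi.single j c, 0)) (v.1 j)]
    · simp [LV_apply, cr, evalVars, dirV, sgV]
    · intro a b
      ext i
      · by_cases h : i = j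
        · subst h; simp
        · simp [h]
      · simp
  · refine Finset.sum_congr rfl fun j _ => ?_
    rw [h1 j (fun c => (0, Pi.single j c)) (v.2 j)]
    · simp [LV_apply, cr, evalVars, dirV, sgV]
    · intro a b
      ext i
      · simp
      · by_cases h : i = j
        · subst h; simp
        · simp [h]

lemma fn_C {n : ℕ} (a : ℂ) : fn (n := n) (MvPolynomial.C a) = fun _ => a := by
  funext p; simp [fn]

lemma fn_X {n : ℕ} (x : Var n) : fn (MvPolynomial.X x) = cr x := by
  funext p; simp [fn, cr]

lemma fn_add {n : ℕ} (P Q : MvPolynomial (Var n) ℂ) : fn (P + Q) = fun p => fn P p + fn Q p := by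
  funext p; simp [fn]

lemma fn_mul {n : ℕ} (P Q : MvPolynomial (Var n) ℂ) : fn (P * Q) = fun p => fn P p * fn Q p := by
  funext p; simp [fn]

lemma Sm_fn {n : ℕ} (P : MvPolynomial (Var n) ℂ) : Sm (fn P) := by
  induction P using MvPolynomial.induction_on with
  | C a => rw [fn_C]; exact contDiff_const
  | add P Q hP hQ => rw [fn_add]; exact hP.add hQ
  | mul_X P x hP => rw [fn_mul, fn_X]; exact hP.mul (Sm_cr x)

lemma DD_fn {n : ℕ} (x : Var n) (P : MvPolynomial (Var n) ℂ) :
    DD x (fn P) = fn (MvPolynomial.pderiv x P) := by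
  induction P using MvPolynomial.induction_on with
  | C a => rw [fn_C, DD_const, MvPolynomial.pderiv_C]; funext p; simp [fn]
  | add P Q hP hQ => rw [fn_add, DD_add (Sm_fn P) (Sm_fn Q), hP, hQ, map_add, fn_add]
  | mul_X P y hP =>
    rw [fn_mul, fn_X, DD_mul (Sm_fn P) (Sm_cr y), hP, DD_cr, MvPolynomial.pderiv_mul]
    funext p
    rw [MvPolynomial.pderiv_X]
    by_cases h : x = y
    · subst h; simp [fn, cr]
    · simp [fn, cr, h, Pi.single_apply, Ne.symm h]

lemma bigO_step {n : ℕ} {f : EE n → ℂ} (hf : Sm f) (h0 : f 0 = 0) (k : ℕ)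
    (h : ∀ x, DD x f =O[nhds 0] fun p => ‖p‖ ^ k) :
    f =O[nhds 0] fun p => ‖p‖ ^ (k + 1) := by
  have h1 : (fderiv ℝ f) =O[nhds 0] fun p : EE n => ‖p‖ ^ k := by
    have h2 : (fun p => ∑ x, ‖DD x f p‖ * ‖crL (n := n) x‖) =O[nhds 0]
        fun p : EE n => ‖p‖ ^ k := by
      refine IsBigO.fun_sum fun x _ => ?_
      have := (h x).norm_left.mul (isBigO_const_const ‖crL (n := n) x‖ (one_ne_zero (α := ℝ))
        (nhds (0 : EE n)))
      simpa using this
    refine IsBigO.trans (IsBigO.of_bound 1 (Filter.Eventually.of_forall fun p => ?_)) h2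
    rw [one_mul, Real.norm_of_nonneg (Finset.sum_nonneg fun _ _ => by positivity)]
    refine ContinuousLinearMap.opNorm_le_bound _ (Finset.sum_nonneg fun _ _ => by positivity)
      fun v => ?_
    rw [fderiv_decomp, Finset.sum_mul]
    refine (norm_sum_le _ _).trans (Finset.sum_le_sum fun x _ => ?_)
    rw [norm_mul, mul_assoc, ← crL_apply]
    exact mul_le_mul_of_nonneg_left ((crL x).le_opNorm v) (norm_nonneg _)
  obtain ⟨C, hC, hb⟩ := h1.exists_nonneg
  rw [IsBigOWith] at hb
  obtain ⟨r, hr, hball⟩ := Metric.eventually_nhds_iff_ball.1 hb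
  refine IsBigO.of_bound C ?_
  refine Metric.eventually_nhds_iff_ball.2 ⟨r, hr, fun p hp => ?_⟩
  have key := (convex_closedBall (0 : EE n) ‖p‖).norm_image_sub_le_of_norm_fderiv_le
    (f := f) (𝕜 := ℝ) (C := C * ‖p‖ ^ k) (x := 0) (y := p) (fun x _ => hf.diff x)
    (fun x hx => ?_) (by simp) (by simp)
  · rw [h0, sub_zero, sub_zero] at key
    rw [Real.norm_of_nonneg (by positivity), pow_succ, ← mul_assoc]
    exact key
  · have hx' : ‖x‖ ≤ ‖p‖ := by simpa using hx
    have hp' : ‖p‖ < r := by simpa using hp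
    refine (hball x (by simpa using hx'.trans_lt hp')).trans ?_
    rw [Real.norm_of_nonneg (by positivity)]
    gcongr

lemma bigO1 {n : ℕ} {f : EE n → ℂ} (hf : Sm f) (h0 : f 0 = 0) :
    f =O[nhds 0] fun p => ‖p‖ ^ 1 := by
  refine bigO_step hf h0 0 fun x => ?_
  simp only [pow_zero]
  exact ((hf.DD x).continuous.tendsto 0).isBigO_one ℝ

lemma bigO2 {n : ℕ} {f : EE n → ℂ} (hf : Sm f) (h0 : f 0 = 0) (h1 : ∀ x, DD x f 0 = 0) :
    f =O[nhds 0] fun p => ‖p‖ ^ 2 :=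
  bigO_step hf h0 1 fun x => bigO1 (hf.DD x) (h1 x)

lemma bigO3 {n : ℕ} {f : EE n → ℂ} (hf : Sm f) (h0 : f 0 = 0) (h1 : ∀ x, DD x f 0 = 0)
    (h2 : ∀ x y, DD x (DD y f) 0 = 0) :
    f =O[nhds 0] fun p => ‖p‖ ^ 3 :=
  bigO_step hf h0 2 fun x => bigO2 (hf.DD x) (h1 x) fun y => h2 y x

lemma bigO4 {n : ℕ} {f : EE n → ℂ} (hf : Sm f) (h0 : f 0 = 0) (h1 : ∀ x, DD x f 0 = 0)
    (h2 : ∀ x y, DD x (DD y f) 0 = 0) (h3 : ∀ x y z, DD x (DD y (DD z f)) 0 = 0) :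
    f =O[nhds 0] fun p => ‖p‖ ^ 4 :=
  bigO_step hf h0 3 fun x => bigO3 (hf.DD x) (h1 x) (fun y => h2 y x) fun y z => h3 y z x

open MvPolynomial in
def linP {n : ℕ} (S : Var n → ℂ) : MvPolynomial (Var n) ℂ := ∑ x, C (S x) * X x

open MvPolynomial in
def quadP {n : ℕ} (S : Var n → Var n → ℂ) : MvPolynomial (Var n) ℂ :=
  C (1 / 2) * ∑ x, ∑ y, C (S x y) * X x * X y

open MvPolynomial in
def cubP {n : ℕ} (S : Var n → Var n → Var n → ℂ) : MvPolynomial (Var n) ℂ :=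
  C (1 / 6) * ∑ x, ∑ y, ∑ z, C (S x y z) * X x * X y * X z

lemma DX {n : ℕ} (x y : Var n) : MvPolynomial.pderiv x (MvPolynomial.X (R := ℂ) y)
    = if y = x then 1 else 0 := by
  rw [MvPolynomial.pderiv_X, Pi.single_apply]

lemma pderiv_lin {n : ℕ} (S : Var n → ℂ) (x : Var n) :
    MvPolynomial.pderiv x (linP S) = MvPolynomial.C (S x) := by
  simp only [linP, map_sum, MvPolynomial.pderiv_mul, MvPolynomial.pderiv_C, DX]
  simp

lemma pderiv_quad {n : ℕ} (S : Var n → Var n → ℂ) (hS : ∀ x y, S x y = S y x) (x : Var n) :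
    MvPolynomial.pderiv x (quadP S) = linP (S x) := by
  simp only [quadP, linP, map_sum, MvPolynomial.pderiv_mul, MvPolynomial.pderiv_C, DX,
    zero_mul, zero_add, mul_ite, mul_one, mul_zero, ite_mul, Finset.sum_add_distrib,
    Finset.sum_ite_irrel, Finset.sum_ite_eq', Finset.mem_univ, if_true, Finset.sum_const_zero]
  simp only [hS _ x]
  rw [← two_mul, ← mul_assoc]
  have : (MvPolynomial.C (1/2 : ℂ) : MvPolynomial (Var n) ℂ) * 2 = 1 := by
    rw [show (2 : MvPolynomial (Var n) ℂ) = MvPolynomial.C 2 from (map_ofNat _ 2).symm,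
      ← MvPolynomial.C_mul]; norm_num
  rw [this, one_mul]

lemma pderiv_cub {n : ℕ} (S : Var n → Var n → Var n → ℂ) (hS : ∀ x y z, S x y z = S y x z)
    (hS' : ∀ x y z, S x y z = S x z y) (x : Var n) :
    MvPolynomial.pderiv x (cubP S) = quadP (S x) := by
  simp only [quadP, cubP, map_sum, MvPolynomial.pderiv_mul, MvPolynomial.pderiv_C, DX,
    zero_mul, zero_add, mul_ite, mul_one, mul_zero, ite_mul, add_mul, Finset.sum_add_distrib,
    Finset.sum_ite_irrel, Finset.sum_ite_eq', Finset.mem_univ, if_true, Finset.sum_const_zero]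
  have e1 : ∀ a b, S a x b = S x a b := fun a b => hS _ _ _
  have e2 : ∀ a b, S a b x = S x a b := fun a b => by rw [hS', hS]
  simp only [e1, e2]
  have : (MvPolynomial.C (1/2 : ℂ) : MvPolynomial (Var n) ℂ) = MvPolynomial.C (1/6) * 3 := by
    rw [show (3 : MvPolynomial (Var n) ℂ) = MvPolynomial.C 3 from (map_ofNat _ 3).symm,
      ← MvPolynomial.C_mul]; norm_num
  rw [this]
  ring

lemma evalVars_zero {n : ℕ} (x : Var n) : evalVars (0 : EE n).1 (0 : EE n).2 x = 0 := by
  simp [evalVars]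

lemma fn_lin0 {n : ℕ} (S : Var n → ℂ) : fn (linP S) 0 = 0 := by
  simp only [fn, linP, map_sum, map_mul, MvPolynomial.eval_X, evalVars_zero]; simp
lemma fn_quad0 {n : ℕ} (S : Var n → Var n → ℂ) : fn (quadP S) 0 = 0 := by
  simp only [fn, quadP, map_sum, map_mul, MvPolynomial.eval_X, evalVars_zero]; simp
lemma fn_cub0 {n : ℕ} (S : Var n → Var n → Var n → ℂ) : fn (cubP S) 0 = 0 := by
  simp only [fn, cubP, map_sum, map_mul, MvPolynomial.eval_X, evalVars_zero]; simp

lemma evalVars_smul {n : ℕ} (t : ℝ) (p : EE n) (x : Var n) :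
    evalVars (t • p).1 (t • p).2 x = t * evalVars p.1 p.2 x := by
  simp only [evalVars]; split_ifs <;> simp

lemma fn_quad_smul {n : ℕ} (S : Var n → Var n → ℂ) (t : ℝ) (p : EE n) :
    fn (quadP S) (t • p) = t ^ 2 * fn (quadP S) p := by
  simp only [fn, quadP, map_sum, map_mul, MvPolynomial.eval_X, evalVars_smul, Finset.mul_sum,
    MvPolynomial.eval_C]
  refine Finset.sum_congr rfl fun x _ => Finset.sum_congr rfl fun y _ => ?_
  ring

lemma quad_zero {n : ℕ} (S : Var n → Var n → ℂ)
    (h : fn (quadP S) =O[nhds 0] fun p => ‖p‖ ^ 3) : fn (quadP S) = fun _ => 0 := by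
  funext p
  obtain ⟨C, hC, hb⟩ := h.exists_nonneg
  rw [IsBigOWith] at hb
  have ht : Filter.Tendsto (fun t : ℝ => t • p) (nhdsWithin 0 (Set.Ioi 0)) (nhds 0) := by
    have : Filter.Tendsto (fun t : ℝ => t • p) (nhds 0) (nhds ((0 : ℝ) • p)) :=
      (continuous_id.smul continuous_const).tendsto 0
    rw [zero_smul] at this
    exact this.mono_left nhdsWithin_le_nhds
  have hlim : Filter.Tendsto (fun t : ℝ => C * ‖p‖ ^ 3 * t) (nhdsWithin 0 (Set.Ioi 0)) (nhds 0) := by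
    have : Filter.Tendsto (fun t : ℝ => C * ‖p‖ ^ 3 * t) (nhds 0) (nhds (C * ‖p‖ ^ 3 * 0)) :=
      (continuous_const.mul continuous_id).tendsto 0
    rw [mul_zero] at this
    exact this.mono_left nhdsWithin_le_nhds
  have : ‖fn (quadP S) p‖ ≤ 0 := by
    refine ge_of_tendsto hlim ?_
    filter_upwards [ht.eventually hb, self_mem_nhdsWithin] with t h1 h2
    have h2 : 0 < t := h2
    rw [fn_quad_smul, norm_mul, norm_pow, norm_real, Real.norm_of_nonneg h2.le,
      Real.norm_of_nonneg (by positivity), norm_smul, Real.norm_of_nonneg h2.le] at h1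
    have h3 : t ^ 2 * ‖fn (quadP S) p‖ ≤ t ^ 2 * (C * ‖p‖ ^ 3 * t) := by
      calc _ ≤ _ := h1
        _ = _ := by ring
    exact le_of_mul_le_mul_left h3 (by positivity)
  exact norm_le_zero_iff.1 this

lemma jet2 {n : ℕ} {f : EE n → ℂ} (hf : Sm f) (h : f =O[nhds 0] fun p => ‖p‖ ^ 3) :
    f 0 = 0 ∧ (∀ x, DD x f 0 = 0) ∧ (∀ x y, DD x (DD y f) 0 = 0) := by
  have h' : f =O[nhds 0] fun p => ‖p - 0‖ ^ 3 := by simpa using h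
  have h0 : f 0 = 0 := h'.eq_zero_of_norm_pow (by norm_num)
  have h1 : ∀ x, DD x f 0 = 0 := by
    intro x
    have := (h'.hasFDerivAt (𝕜 := ℝ) (by norm_num)).fderiv
    simp [DD, this]
  refine ⟨h0, h1, ?_⟩
  let S : Var n → Var n → ℂ := fun x y => DD x (DD y f) 0
  have hS : ∀ x y, S x y = S y x := fun x y => by simp only [S]; rw [DD_comm hf]
  have d1 : ∀ x, DD x (fn (quadP S)) = fn (linP (S x)) := fun x => by
    rw [DD_fn, pderiv_quad S hS]
  have d2 : ∀ x y, DD x (DD y (fn (quadP S))) = fun _ => S y x := fun x y => by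
    rw [d1, DD_fn, pderiv_lin, fn_C]
  have hg : (fun p => f p - fn (quadP S) p) =O[nhds 0] fun p => ‖p‖ ^ 3 := by
    refine bigO3 (hf.sub (Sm_fn _)) ?_ ?_ ?_
    · rw [h0, fn_quad0, sub_zero]
    · intro x
      rw [DD_sub hf (Sm_fn _), d1]
      simp only
      rw [h1, fn_lin0, sub_zero]
    · intro x y
      rw [DD_sub hf (Sm_fn _), DD_sub (hf.DD _) ((Sm_fn _).DD _), d2]
      simp only
      rw [hS y x, sub_self]
  have hq : fn (quadP S) =O[nhds 0] fun p => ‖p‖ ^ 3 := by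
    have := h.sub hg
    simpa using this
  have hz := quad_zero S hq
  intro x y
  have := d2 y x
  rw [hz, DD_const, DD_const] at this
  exact (congrFun this 0).symm

lemma DD_sub2 {n : ℕ} {f g : EE n → ℂ} (hf : Sm f) (hg : Sm g) (x y : Var n) :
    DD x (DD y (fun p => f p - g p)) = fun p => DD x (DD y f) p - DD x (DD y g) p := by
  rw [DD_sub hf hg, DD_sub (hf.DD _) (hg.DD _)]

lemma DD_sub3 {n : ℕ} {f g : EE n → ℂ} (hf : Sm f) (hg : Sm g) (x y z : Var n) :
    DD x (DD y (DD z (fun p => f p - g p))) =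
      fun p => DD x (DD y (DD z f)) p - DD x (DD y (DD z g)) p := by
  rw [DD_sub hf hg, DD_sub2 (hf.DD _) (hg.DD _)]

lemma taylor3 {n : ℕ} {f : EE n → ℂ} (hf : Sm f) (h : f =O[nhds 0] fun p => ‖p‖ ^ 3) :
    (fun p => f p - fn (cubP fun x y z => DD x (DD y (DD z f)) 0) p)
      =O[nhds 0] fun p => ‖p‖ ^ 4 := by
  obtain ⟨h0, h1, h2⟩ := jet2 hf h
  set S : Var n → Var n → Var n → ℂ := fun x y z => DD x (DD y (DD z f)) 0 with hSdef
  have hS : ∀ x y z, S x y z = S y x z := fun x y z => by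
    simp only [S]; rw [DD_comm (hf.DD z)]
  have hS' : ∀ x y z, S x y z = S x z y := fun x y z => by
    simp only [S]; rw [DD_comm hf y z]
  have d1 : ∀ x, DD x (fn (cubP S)) = fn (quadP (S x)) := fun x => by
    rw [DD_fn, pderiv_cub S hS hS']
  have d2 : ∀ x y, DD x (DD y (fn (cubP S))) = fn (linP (S y x)) := fun x y => by
    rw [d1, DD_fn, pderiv_quad _ (hS' y)]
  have d3 : ∀ x y z, DD x (DD y (DD z (fn (cubP S)))) = fun _ => S z y x := fun x y z => by
    rw [d2, DD_fn, pderiv_lin, fn_C]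
  refine bigO4 (hf.sub (Sm_fn _)) ?_ ?_ ?_ ?_
  · rw [h0, fn_cub0, sub_zero]
  · intro x
    rw [DD_sub hf (Sm_fn _), d1]
    simp only
    rw [h1, fn_quad0, sub_zero]
  · intro x y
    rw [DD_sub2 hf (Sm_fn _), d2]
    simp only
    rw [h2, fn_lin0, sub_zero]
  · intro x y z
    rw [DD_sub3 hf (Sm_fn _), d3]
    simp only
    rw [hS' z, hS z, hS' x, sub_eq_zero]

def kA (p1 m1 p2 m2 p3 m3 : ℝ) : ℝ :=
  ((p1 - m1) + (p2 - m2) + (p3 - m3)) / ((p1 + m1) + (p2 + m2) + (p3 + m3))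

def kB (p1 m1 p2 m2 p3 m3 : ℝ) : ℝ :=
  2 * m3 * (p1 + p2) / (((p1 + m1) + (p2 + m2)) * ((p1 + m1) + (p2 + m2) + (p3 + m3)))
  - 2 * p3 * (m1 + m2) / (((p1 + m1) + (p2 + m2)) * ((p1 + m1) + (p2 + m2) + (p3 + m3)))

def kC (p1 m1 p2 m2 p3 m3 : ℝ) : ℝ :=
  (if p1 = 0 then 0 else m2 * m3 / (p1 + m2 + m3) * (1 / (m2 + p1) + 1 / (p1 + m3)))
  - (if m1 = 0 then 0 else p2 * p3 / (m1 + p2 + p3) * (1 / (p2 + m1) + 1 / (m1 + p3)))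
  + (if p1 = 0 then 0 else 2 * m2 * p3 / ((p1 + m2) * (p1 + m2 + p3)))
  - (if m1 = 0 then 0 else 2 * m2 * p3 / ((m1 + p3) * (m1 + m2 + p3)))

def hh (p1 m1 p2 m2 p3 m3 : ℝ) (z1 w1 z2 w2 z3 w3 : ℂ) : ℂ :=
  (kA p1 m1 p2 m2 p3 m3 : ℂ) / 6 * (((p1 + m1 : ℝ) : ℂ) * (z1 - w1) * z2 * z3
     + z1 * (((p2 + m2 : ℝ) : ℂ) * (z2 - w2)) * z3 + z1 * z2 * (((p3 + m3 : ℝ) : ℂ) * (z3 - w3)))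
  + (kB p1 m1 p2 m2 p3 m3 : ℂ) / 2 * (((p1 + m1 : ℝ) : ℂ) * (z1 - w1) * z2 * w3
     + z1 * (((p2 + m2 : ℝ) : ℂ) * (z2 - w2)) * w3)
  + (kC p1 m1 p2 m2 p3 m3 : ℂ) * (((p1 + m1 : ℝ) : ℂ) * (z1 - w1) * w2 * w3)
  - (1 / 2) * ((p3 - m3 : ℝ) : ℂ) * (z3 - w3) * z1 * z2

def tri (p m : ℝ) : Prop := (0 < p ∧ m = 0) ∨ (p = 0 ∧ 0 < m) ∨ (p = 0 ∧ m = 0)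

def tle (p1 m1 p2 m2 : ℝ) : Prop := (p1 = 0 → p2 = 0) ∧ (p1 = 0 → m1 = 0 → m2 = 0)

lemma tle_total {p1 m1 p2 m2 : ℝ} (h1 : tri p1 m1) (h2 : tri p2 m2) :
    tle p1 m1 p2 m2 ∨ tle p2 m2 p1 m1 := by
  rcases h1 with ⟨a1, rfl⟩ | ⟨rfl, a1⟩ | ⟨rfl, rfl⟩ <;>
  rcases h2 with ⟨a2, rfl⟩ | ⟨rfl, a2⟩ | ⟨rfl, rfl⟩ <;>
  simp [tle, *, ne_of_gt]

set_option maxHeartbeats 4000000 in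
lemma hh_core (p1 m1 p2 m2 p3 m3 : ℝ) (z1 w1 z2 w2 z3 w3 : ℂ)
    (h1 : tri p1 m1) (h2 : tri p2 m2) (h3 : tri p3 m3)
    (l12 : tle p1 m1 p2 m2) (l23 : tle p2 m2 p3 m3) :
    hh p1 m1 p2 m2 p3 m3 z1 w1 z2 w2 z3 w3 + hh p1 m1 p3 m3 p2 m2 z1 w1 z3 w3 z2 w2
    + hh p2 m2 p1 m1 p3 m3 z2 w2 z1 w1 z3 w3 + hh p2 m2 p3 m3 p1 m1 z2 w2 z3 w3 z1 w1
    + hh p3 m3 p1 m1 p2 m2 z3 w3 z1 w1 z2 w2 + hh p3 m3 p2 m2 p1 m1 z3 w3 z2 w2 z1 w1 = 0 := by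
  rcases h1 with ⟨a1, rfl⟩ | ⟨rfl, a1⟩ | ⟨rfl, rfl⟩ <;>
  rcases h2 with ⟨a2, rfl⟩ | ⟨rfl, a2⟩ | ⟨rfl, rfl⟩ <;>
  rcases h3 with ⟨a3, rfl⟩ | ⟨rfl, a3⟩ | ⟨rfl, rfl⟩ <;>
  first
  | exact absurd (l12.1 rfl) a2.ne'
  | exact absurd (l12.2 rfl rfl) a2.ne'
  | exact absurd (l23.1 rfl) a3.ne'
  | exact absurd (l23.2 rfl rfl) a3.ne'
  | (clear l12 l23; simp only [hh, kA, kB, kC]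
     try have b1 := ofReal_ne_zero.2 a1.ne'
     try have b2 := ofReal_ne_zero.2 a2.ne'
     try have b3 := ofReal_ne_zero.2 a3.ne'
     try have b12 := ofReal_ne_zero.2 (add_pos a1 a2).ne'
     try have b13 := ofReal_ne_zero.2 (add_pos a1 a3).ne'
     try have b23 := ofReal_ne_zero.2 (add_pos a2 a3).ne'
     try have b21 := ofReal_ne_zero.2 (add_pos a2 a1).ne'
     try have b31 := ofReal_ne_zero.2 (add_pos a3 a1).ne'
     try have b32 := ofReal_ne_zero.2 (add_pos a3 a2).ne'
     try have b123 := ofReal_ne_zero.2 (add_pos (add_pos a1 a2) a3).ne'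
     try have b132 := ofReal_ne_zero.2 (add_pos (add_pos a1 a3) a2).ne'
     try have b213 := ofReal_ne_zero.2 (add_pos (add_pos a2 a1) a3).ne'
     try have b231 := ofReal_ne_zero.2 (add_pos (add_pos a2 a3) a1).ne'
     try have b312 := ofReal_ne_zero.2 (add_pos (add_pos a3 a1) a2).ne'
     try have b321 := ofReal_ne_zero.2 (add_pos (add_pos a3 a2) a1).ne'
     try push_cast at *
     try simp only [a1.ne', if_false]
     try simp only [a2.ne', if_false]
     try simp only [a3.ne', if_false]
     simp
     try field_simp
     try ring)

lemma hh_sum (p1 m1 p2 m2 p3 m3 : ℝ) (z1 w1 z2 w2 z3 w3 : ℂ)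
    (h1 : tri p1 m1) (h2 : tri p2 m2) (h3 : tri p3 m3) :
    hh p1 m1 p2 m2 p3 m3 z1 w1 z2 w2 z3 w3 + hh p1 m1 p3 m3 p2 m2 z1 w1 z3 w3 z2 w2
    + hh p2 m2 p1 m1 p3 m3 z2 w2 z1 w1 z3 w3 + hh p2 m2 p3 m3 p1 m1 z2 w2 z3 w3 z1 w1
    + hh p3 m3 p1 m1 p2 m2 z3 w3 z1 w1 z2 w2 + hh p3 m3 p2 m2 p1 m1 z3 w3 z2 w2 z1 w1 = 0 := by
  rcases tle_total h1 h2 with a | a <;> rcases tle_total h2 h3 with b | b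
  · exact hh_core _ _ _ _ _ _ _ _ _ _ _ _ h1 h2 h3 a b
  · rcases tle_total h1 h3 with c | c
    · linear_combination hh_core _ _ _ _ _ _ z1 w1 z3 w3 z2 w2 h1 h3 h2 c b
    · linear_combination hh_core _ _ _ _ _ _ z3 w3 z1 w1 z2 w2 h3 h1 h2 c a
  · rcases tle_total h1 h3 with c | c
    · linear_combination hh_core _ _ _ _ _ _ z2 w2 z1 w1 z3 w3 h2 h1 h3 a c
    · linear_combination hh_core _ _ _ _ _ _ z2 w2 z3 w3 z1 w1 h2 h3 h1 b c
  · linear_combination hh_core _ _ _ _ _ _ z3 w3 z2 w2 z1 w1 h3 h2 h1 b a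

def iV {n : ℕ} : Fin n ⊕ Fin n → Var n
  | Sum.inl j => (1, j)
  | Sum.inr j => (0, j)

def oV {n : ℕ} : Fin n ⊕ Fin n → Var n
  | Sum.inl j => (3, j)
  | Sum.inr j => (2, j)

def pW {n : ℕ} (q : ℕ) (lam : Fin n → ℝ) : Fin n ⊕ Fin n → ℝ
  | Sum.inl j => if q ≤ (j : ℕ) then |lam j| else 0
  | Sum.inr _ => 0

def mW {n : ℕ} (q : ℕ) (lam : Fin n → ℝ) : Fin n ⊕ Fin n → ℝ
  | Sum.inl _ => 0
  | Sum.inr j => if (j : ℕ) < q then |lam j| else 0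

lemma tri_W {n : ℕ} (q : ℕ) (lam : Fin n → ℝ) (hl : ∀ j, lam j ≠ 0) (v : Fin n ⊕ Fin n) :
    tri (pW q lam v) (mW q lam v) := by
  rcases v with j | j
  · simp only [pW, mW, tri]
    have := abs_pos.2 (hl j)
    split_ifs <;> simp [this, hl j]
  · simp only [pW, mW, tri]
    have := abs_pos.2 (hl j)
    split_ifs <;> simp [this, hl j]

def aW {n : ℕ} (q : ℕ) (lam : Fin n → ℝ) (v : Fin n ⊕ Fin n) : ℝ := pW q lam v + mW q lam v

lemma aW_nonneg {n : ℕ} (q : ℕ) (lam : Fin n → ℝ) (v : Fin n ⊕ Fin n) : 0 ≤ aW q lam v := by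
  rcases v with j | j <;> simp only [aW, pW, mW] <;> split_ifs <;> simp

lemma iV_inj {n : ℕ} {v w : Fin n ⊕ Fin n} (h : iV v = iV w) : v = w := by
  rcases v with v | v <;> rcases w with w | w <;> simp_all [iV]

lemma iV_ne_oV {n : ℕ} (v w : Fin n ⊕ Fin n) : iV v ≠ oV w := by
  rcases v with v | v <;> rcases w with w | w <;> simp [iV, oV]

lemma sum_Var {n : ℕ} {M : Type*} [AddCommMonoid M] (f : Var n → M) :
    ∑ x, f x = ∑ v, f (iV v) + ∑ v, f (oV v) := by
  rw [Fintype.sum_prod_type, Fin.sum_univ_four, Fintype.sum_sum_type, Fintype.sum_sum_type]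
  simp only [iV, oV]
  abel

open MvPolynomial in
def YV {n : ℕ} (v : Fin n ⊕ Fin n) : MvPolynomial (Var n) ℂ := X (iV v) - X (oV v)

open MvPolynomial in
def LD {n : ℕ} (q : ℕ) (lam : Fin n → ℝ) :
    Derivation ℂ (MvPolynomial (Var n) ℂ) (MvPolynomial (Var n) ℂ) :=
  ∑ v, (C (aW q lam v : ℂ) * YV v) • pderiv (iV v)

lemma LD_apply {n : ℕ} (q : ℕ) (lam : Fin n → ℝ) (P : MvPolynomial (Var n) ℂ) :
    LD q lam P = ∑ v, MvPolynomial.C (aW q lam v : ℂ) * YV v * MvPolynomial.pderiv (iV v) P := by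
  show Derivation.coeFnAddMonoidHom (LD q lam) P = _
  rw [LD, map_sum, Finset.sum_apply]
  rfl

lemma LD_i {n : ℕ} (q : ℕ) (lam : Fin n → ℝ) (v : Fin n ⊕ Fin n) :
    LD q lam (MvPolynomial.X (iV v)) = MvPolynomial.C (aW q lam v : ℂ) * YV v := by
  rw [LD_apply, Finset.sum_eq_single v]
  · simp
  · intro w _ hw
    rw [DX, if_neg (fun h => hw (iV_inj h).symm), mul_zero]
  · simp

lemma LD_o {n : ℕ} (q : ℕ) (lam : Fin n → ℝ) (v : Fin n ⊕ Fin n) :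
    LD q lam (MvPolynomial.X (oV v)) = 0 := by
  rw [LD_apply]
  refine Finset.sum_eq_zero fun w _ => ?_
  rw [DX, if_neg (fun h => iV_ne_oV _ _ h.symm), mul_zero]

open MvPolynomial in
lemma kernel {n : ℕ} (q : ℕ) (lam : Fin n → ℝ) (R : MvPolynomial (Var n) ℂ)
    (h : LD q lam R = 0) : ∀ m ∈ R.support, ∀ v, aW q lam v ≠ 0 → m (iV v) = 0 := by
  classical
  by_contra hcon
  push Not at hcon
  let wt : (Var n →₀ ℕ) → ℕ := fun m => ∑ v, if aW q lam v ≠ 0 then m (iV v) else 0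
  obtain ⟨m1, hm1, v1, hv1, hmv1⟩ := hcon
  obtain ⟨m0, hm0, hmax⟩ := R.support.exists_max_image wt ⟨m1, hm1⟩
  have hw1 : 0 < wt m1 := by
    refine Finset.sum_pos' (fun _ _ => by positivity) ⟨v1, Finset.mem_univ _, ?_⟩
    rw [if_pos hv1]; exact Nat.pos_of_ne_zero hmv1
  have hw0 : 0 < wt m0 := hw1.trans_le (hmax m1 hm1)
  have hc : coeff m0 (LD q lam R) = 0 := by rw [h]; simp
  have key : ∀ v, coeff m0 (C (aW q lam v : ℂ) * YV v * pderiv (iV v) R)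
      = aW q lam v * m0 (iV v) * coeff m0 R := by
    intro v
    by_cases ha : aW q lam v = 0
    · simp [ha]
    rw [mul_assoc, coeff_C_mul, YV, sub_mul, coeff_sub, coeff_X_mul', coeff_X_mul']
    have e1 : (if iV v ∈ m0.support then
        coeff (m0 - Finsupp.single (iV v) 1) (pderiv (iV v) R) else 0)
        = m0 (iV v) * coeff m0 R := by
      split_ifs with hh
      · have hne : m0 (iV v) ≠ 0 := by simpa using hh
        rw [coeff_pderiv, Finsupp.sub_add_single_one_cancel hne]
        have : (((m0 - Finsupp.single (iV v) 1 : Var n →₀ ℕ) (iV v) : ℕ) : ℂ) + 1 = m0 (iV v) := by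
          rw [Finsupp.tsub_apply, Finsupp.single_eq_same]
          exact_mod_cast Nat.sub_add_cancel (Nat.pos_of_ne_zero hne)
        rw [this, mul_comm]
      · have : m0 (iV v) = 0 := by simpa using hh
        simp [this]
    have e2 : (if oV v ∈ m0.support then
        coeff (m0 - Finsupp.single (oV v) 1) (pderiv (iV v) R) else 0) = 0 := by
      split_ifs with hh
      · rw [coeff_pderiv]
        have : coeff (m0 - Finsupp.single (oV v) 1 + Finsupp.single (iV v) 1) R = 0 := by
          by_contra hne
          have hle := hmax _ (mem_support_iff.2 hne)
          have hval : ∀ w, (m0 - Finsupp.single (oV v) 1 + Finsupp.single (iV v) 1 : Var n →₀ ℕ) (iV w)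
              = m0 (iV w) + if w = v then 1 else 0 := by
            intro w
            rw [Finsupp.add_apply, Finsupp.tsub_apply,
              Finsupp.single_apply, if_neg (fun h => iV_ne_oV _ _ h.symm), Finsupp.single_apply]
            by_cases hwv : w = v
            · simp [hwv]
            · rw [if_neg (fun h => hwv (iV_inj h).symm), if_neg hwv]; simp
          have hlt : wt m0 < wt (m0 - Finsupp.single (oV v) 1 + Finsupp.single (iV v) 1) := by
            refine Finset.sum_lt_sum (fun w _ => ?_) ⟨v, Finset.mem_univ _, ?_⟩
            · rw [hval]; split_ifs <;> omega
            · rw [hval, if_pos ha, if_pos ha]; simp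
          omega
        rw [this, zero_mul]
      · rfl
    rw [e1, e2, sub_zero, mul_assoc]
  rw [LD_apply, coeff_sum, Finset.sum_congr rfl (fun v _ => key v), ← Finset.sum_mul] at hc
  rcases mul_eq_zero.1 hc with hz | hz
  · have hz' : ∑ v, aW q lam v * m0 (iV v) = 0 := by exact_mod_cast hz
    rw [Finset.sum_eq_zero_iff_of_nonneg
      (fun v _ => mul_nonneg (aW_nonneg q lam v) (Nat.cast_nonneg _))] at hz'
    have : wt m0 = 0 := by
      refine Finset.sum_eq_zero fun v _ => ?_
      split_ifs with ha
      · have := hz' v (Finset.mem_univ _)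
        rcases mul_eq_zero.1 this with h | h
        · exact absurd h ha
        · exact_mod_cast h
      · rfl
    omega
  · exact (mem_support_iff.1 hm0) hz

lemma symm_sum {V : Type*} [Fintype V] (T h : V → V → V → ℂ)
    (hT : ∀ x y z, T x y z = T y x z) (hT' : ∀ x y z, T x y z = T x z y)
    (hs : ∀ a b c, h a b c + h a c b + h b a c + h b c a + h c a b + h c b a = 0) :
    ∑ a, ∑ b, ∑ c, T a b c * h a b c = 0 := by
  have s0 : ∀ f : V → V → V → ℂ, ∑ a, ∑ b, ∑ c, f a b c = ∑ a, ∑ b, ∑ c, f a c b :=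
    fun f => Finset.sum_congr rfl fun a _ => Finset.sum_comm
  have s1 : ∀ f : V → V → V → ℂ, ∑ a, ∑ b, ∑ c, f a b c = ∑ a, ∑ b, ∑ c, f b a c :=
    fun f => Finset.sum_comm
  set F : V → V → V → ℂ := fun a b c => T a b c * h a b c
  have e1 := s0 F
  have e2 := s1 F
  have e3 := s1 (fun a b c => F a c b)
  have e4 := s0 (fun a b c => F b a c)
  have e5 := s1 (fun a b c => F c a b)
  have tot : (∑ a, ∑ b, ∑ c, F a b c) + (∑ a, ∑ b, ∑ c, F a c b) + (∑ a, ∑ b, ∑ c, F b a c)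
    + (∑ a, ∑ b, ∑ c, F b c a) + (∑ a, ∑ b, ∑ c, F c a b) + (∑ a, ∑ b, ∑ c, F c b a) = 0 := by
    simp only [← Finset.sum_add_distrib]
    refine Finset.sum_eq_zero fun a _ => Finset.sum_eq_zero fun b _ => Finset.sum_eq_zero
      fun c _ => ?_
    simp only [F]
    rw [show T a c b = T a b c from (hT' _ _ _).symm, show T b a c = T a b c from hT _ _ _,
      show T b c a = T a b c by rw [hT', hT], show T c a b = T a b c by rw [hT, hT'],
      show T c b a = T a b c by rw [hT', hT, hT']]
    linear_combination T a b c * hs a b c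
  have : 6 * (∑ a, ∑ b, ∑ c, F a b c) = 0 := by
    linear_combination tot + 2 * e1 + 3 * e2 + e3 + 2 * e4 + e5
  simpa using this

open MvPolynomial in
def eP {n : ℕ} (q : ℕ) (lam : Fin n → ℝ) (a b c : Fin n ⊕ Fin n) : MvPolynomial (Var n) ℂ :=
  C (I / 6 * (kA (pW q lam a) (mW q lam a) (pW q lam b) (mW q lam b) (pW q lam c) (mW q lam c) : ℂ))
    * (X (iV a) * X (iV b) * X (iV c))
  + C (I / 2 * (kB (pW q lam a) (mW q lam a) (pW q lam b) (mW q lam b) (pW q lam c) (mW q lam c) : ℂ))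
    * (X (iV a) * X (iV b) * X (oV c))
  + C (I * (kC (pW q lam a) (mW q lam a) (pW q lam b) (mW q lam b) (pW q lam c) (mW q lam c) : ℂ))
    * (X (iV a) * X (oV b) * X (oV c))

open MvPolynomial in
def E3P {n : ℕ} (q : ℕ) (lam : Fin n → ℝ) (T : Fin n ⊕ Fin n → Fin n ⊕ Fin n → Fin n ⊕ Fin n → ℂ) :
    MvPolynomial (Var n) ℂ := ∑ a, ∑ b, ∑ c, C (T a b c) * eP q lam a b c

open MvPolynomial in
lemma LD_E3P {n : ℕ} (q : ℕ) (lam : Fin n → ℝ) (hl : ∀ j, lam j ≠ 0)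
    (T : Fin n ⊕ Fin n → Fin n ⊕ Fin n → Fin n ⊕ Fin n → ℂ)
    (hT : ∀ x y z, T x y z = T y x z) (hT' : ∀ x y z, T x y z = T x z y) :
    LD q lam (E3P q lam T) = C I * ∑ v, C ((pW q lam v - mW q lam v : ℝ) : ℂ) * YV v *
      (C (1 / 2) * ∑ a, ∑ b, C (T v a b) * X (iV a) * X (iV b)) := by
  apply MvPolynomial.funext
  intro x
  have hsum := symm_sum T (fun a b c => hh (pW q lam a) (mW q lam a) (pW q lam b) (mW q lam b)
    (pW q lam c) (mW q lam c) (x (iV a)) (x (oV a)) (x (iV b)) (x (oV b)) (x (iV c)) (x (oV c)))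
    hT hT' (fun a b c => hh_sum _ _ _ _ _ _ _ _ _ _ _ _ (tri_W q lam hl a) (tri_W q lam hl b)
      (tri_W q lam hl c))
  have hr : ∑ v, ((pW q lam v - mW q lam v : ℝ) : ℂ) * (x (iV v) - x (oV v)) *
      ((1 / 2) * ∑ a, ∑ b, T v a b * x (iV a) * x (iV b)) =
      ∑ a, ∑ b, ∑ c, T a b c * ((1 / 2) * ((pW q lam c - mW q lam c : ℝ) : ℂ) *
        (x (iV c) - x (oV c)) * x (iV a) * x (iV b)) := by
    simp only [Finset.mul_sum]
    rw [Finset.sum_comm]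
    refine Finset.sum_congr rfl fun a _ => ?_
    rw [Finset.sum_comm]
    refine Finset.sum_congr rfl fun b _ => Finset.sum_congr rfl fun c _ => ?_
    rw [show T c a b = T a b c by rw [hT, hT']]
    ring
  have hl2 : eval x (LD q lam (E3P q lam T)) = ∑ a, ∑ b, ∑ c, T a b c *
      (I * (hh (pW q lam a) (mW q lam a) (pW q lam b) (mW q lam b)
    (pW q lam c) (mW q lam c) (x (iV a)) (x (oV a)) (x (iV b)) (x (oV b)) (x (iV c)) (x (oV c))
     + ((1 / 2) * ((pW q lam c - mW q lam c : ℝ) : ℂ) *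
        (x (iV c) - x (oV c)) * x (iV a) * x (iV b)))) := by
    simp only [E3P, map_sum]
    refine Finset.sum_congr rfl fun a _ => Finset.sum_congr rfl fun b _ =>
      Finset.sum_congr rfl fun c _ => ?_
    simp only [eP, derivation_C, derivation_C_mul, Derivation.leibniz, map_add, LD_i, LD_o, smul_eq_mul, hh,
      smul_zero, mul_zero, smul_eval, map_mul, eval_C, eval_X, YV, map_sub, aW, zero_add, map_zero]
    ring
  rw [hl2]
  simp only [map_mul, map_sum, eval_C, eval_X, YV, map_sub]
  rw [hr, ← sub_eq_zero, Finset.mul_sum, ← Finset.sum_sub_distrib]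
  rw [← mul_zero I, ← hsum, Finset.mul_sum]
  refine Finset.sum_congr rfl fun a _ => ?_
  rw [Finset.mul_sum, Finset.mul_sum, ← Finset.sum_sub_distrib]
  refine Finset.sum_congr rfl fun b _ => ?_
  rw [Finset.mul_sum, Finset.mul_sum, ← Finset.sum_sub_distrib]
  refine Finset.sum_congr rfl fun c _ => ?_
  ring

open MvPolynomial in
lemma E3P_hom {n : ℕ} (q : ℕ) (lam : Fin n → ℝ)
    (T : Fin n ⊕ Fin n → Fin n ⊕ Fin n → Fin n ⊕ Fin n → ℂ) : (E3P q lam T).IsHomogeneous 3 := by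
  have hm : ∀ (r : ℂ) (x y z : Var n),
      (C r * (X x * X y * X z) : MvPolynomial (Var n) ℂ).IsHomogeneous 3 := by
    intro r x y z
    exact (isHomogeneous_C _ r).mul (((isHomogeneous_X _ x).mul (isHomogeneous_X _ y)).mul
      (isHomogeneous_X _ z))
  refine IsHomogeneous.sum _ _ _ fun a _ => IsHomogeneous.sum _ _ _ fun b _ =>
    IsHomogeneous.sum _ _ _ fun c _ => ?_
  have := (isHomogeneous_C (Var n) (T a b c)).mul (((hm (I / 6 * (kA (pW q lam a) (mW q lam a) (pW q lam b) (mW q lam b) (pW q lam c) (mW q lam c) : ℂ)) (iV a) (iV b) (iV c)).add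
    (hm (I / 2 * (kB (pW q lam a) (mW q lam a) (pW q lam b) (mW q lam b) (pW q lam c) (mW q lam c) : ℂ)) (iV a) (iV b) (oV c))).add
    (hm (I * (kC (pW q lam a) (mW q lam a) (pW q lam b) (mW q lam b) (pW q lam c) (mW q lam c) : ℂ)) (iV a) (oV b) (oV c)))
  rw [zero_add] at this
  exact this

open MvPolynomial in
lemma cubP_hom {n : ℕ} (S : Var n → Var n → Var n → ℂ) : (cubP S).IsHomogeneous 3 := by
  have h : (∑ x, ∑ y, ∑ z, C (S x y z) * X x * X y * X z : MvPolynomial (Var n) ℂ).IsHomogeneous 3 := by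
    refine IsHomogeneous.sum _ _ _ fun a _ => IsHomogeneous.sum _ _ _ fun b _ =>
      IsHomogeneous.sum _ _ _ fun c _ => ?_
    exact (((isHomogeneous_C _ _).mul (isHomogeneous_X _ _)).mul (isHomogeneous_X _ _)).mul
      (isHomogeneous_X _ _)
  have := (isHomogeneous_C (Var n) (1 / 6 : ℂ)).mul h
  rw [zero_add] at this
  exact this

lemma wA_one {n : ℕ} (q : ℕ) (lam : Fin n → ℝ) (v : Fin n ⊕ Fin n) :
    (∑ j : Fin n, if q ≤ (j : ℕ) then |lam j| * (if v = Sum.inl j then 1 else 0) else 0) = pW q lam v := by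
  rcases v with i | i
  · rw [Finset.sum_eq_single i]
    · simp [pW]
    · intro j _ hj
      simp [Ne.symm hj]
    · simp
  · simp [pW]

lemma wB_one {n : ℕ} (q : ℕ) (lam : Fin n → ℝ) (v : Fin n ⊕ Fin n) :
    (∑ j : Fin n, if (j : ℕ) < q then |lam j| * (if v = Sum.inr j then 1 else 0) else 0) = mW q lam v := by
  rcases v with i | i
  · simp [mW]
  · rw [Finset.sum_eq_single i]
    · simp [mW]
    · intro j _ hj
      simp [Ne.symm hj]
    · simp

lemma sw_one {n : ℕ} (q : ℕ) (lam : Fin n → ℝ)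
    (hneg : ∀ j : Fin n, (j : ℕ) < q → lam j < 0)
    (hpos : ∀ j : Fin n, q ≤ (j : ℕ) → 0 < lam j) (v : Fin n ⊕ Fin n) :
    (∑ j : Fin n, if (j : ℕ) < q then lam j * (if v = Sum.inr j then 1 else 0)
      else lam j * (if v = Sum.inl j then 1 else 0)) = pW q lam v - mW q lam v := by
  rcases v with i | i
  · rw [Finset.sum_eq_single i]
    · by_cases h : (i : ℕ) < q
      · simp [pW, mW, h, not_le.2 h]
      · simp [pW, mW, h, not_lt.1 h, abs_of_pos (hpos i (not_lt.1 h))]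
    · intro j _ hj
      simp [Ne.symm hj]
    · simp
  · rw [Finset.sum_eq_single i]
    · by_cases h : (i : ℕ) < q
      · simp [pW, mW, h, abs_of_neg (hneg i h)]
      · simp [pW, mW, h]
    · intro j _ hj
      simp [Ne.symm hj]
    · simp

lemma wA2 {n : ℕ} (q : ℕ) (lam : Fin n → ℝ) (a b : Fin n ⊕ Fin n) :
    wA q lam (aOf2 a b) = pW q lam a + pW q lam b := by
  rw [← wA_one, ← wA_one, wA, ← Finset.sum_add_distrib]
  refine Finset.sum_congr rfl fun j _ => ?_
  simp only [aOf2]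
  split_ifs <;> push_cast <;> ring

lemma wB2 {n : ℕ} (q : ℕ) (lam : Fin n → ℝ) (a b : Fin n ⊕ Fin n) :
    wB q lam (bOf2 a b) = mW q lam a + mW q lam b := by
  rw [← wB_one, ← wB_one, wB, ← Finset.sum_add_distrib]
  refine Finset.sum_congr rfl fun j _ => ?_
  simp only [bOf2]
  split_ifs <;> push_cast <;> ring

lemma wA3 {n : ℕ} (q : ℕ) (lam : Fin n → ℝ) (a b c : Fin n ⊕ Fin n) :
    wA q lam (aOf3 a b c) = pW q lam a + pW q lam b + pW q lam c := by
  rw [← wA_one, ← wA_one, ← wA_one, wA, ← Finset.sum_add_distrib, ← Finset.sum_add_distrib]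
  refine Finset.sum_congr rfl fun j _ => ?_
  simp only [aOf3]
  split_ifs <;> push_cast <;> ring

lemma wB3 {n : ℕ} (q : ℕ) (lam : Fin n → ℝ) (a b c : Fin n ⊕ Fin n) :
    wB q lam (bOf3 a b c) = mW q lam a + mW q lam b + mW q lam c := by
  rw [← wB_one, ← wB_one, ← wB_one, wB, ← Finset.sum_add_distrib, ← Finset.sum_add_distrib]
  refine Finset.sum_congr rfl fun j _ => ?_
  simp only [bOf3]
  split_ifs <;> push_cast <;> ring

lemma sw3 {n : ℕ} (q : ℕ) (lam : Fin n → ℝ)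
    (hneg : ∀ j : Fin n, (j : ℕ) < q → lam j < 0)
    (hpos : ∀ j : Fin n, q ≤ (j : ℕ) → 0 < lam j) (a b c : Fin n ⊕ Fin n) :
    swgt q lam (aOf3 a b c) (bOf3 a b c) = (pW q lam a - mW q lam a) + (pW q lam b - mW q lam b)
      + (pW q lam c - mW q lam c) := by
  rw [← sw_one q lam hneg hpos, ← sw_one q lam hneg hpos, ← sw_one q lam hneg hpos,
    swgt, ← Finset.sum_add_distrib, ← Finset.sum_add_distrib]
  refine Finset.sum_congr rfl fun j _ => ?_
  simp only [aOf3, bOf3]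
  split_ifs <;> push_cast <;> ring

lemma cond0_zero {n : ℕ} (q : ℕ) (lam : Fin n → ℝ) (a b c : Fin n ⊕ Fin n)
    (h : cond0 q (aOf3 a b c) (bOf3 a b c)) :
    wA q lam (aOf3 a b c) = 0 ∧ wB q lam (bOf3 a b c) = 0 := by
  constructor
  · refine Finset.sum_eq_zero fun j _ => ?_
    split_ifs with hj
    · rw [(h j).1 hj]; simp
    · rfl
  · refine Finset.sum_eq_zero fun j _ => ?_
    split_ifs with hj
    · rw [(h j).2 hj]; simp
    · rfl

def kB1 (p1 m1 p2 m2 p3 m3 : ℝ) : ℝ :=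
  2 * m3 * (p1 + p2) / (((p1 + m1) + (p2 + m2)) * ((p1 + m1) + (p2 + m2) + (p3 + m3)))
def kB2 (p1 m1 p2 m2 p3 m3 : ℝ) : ℝ :=
  2 * p3 * (m1 + m2) / (((p1 + m1) + (p2 + m2)) * ((p1 + m1) + (p2 + m2) + (p3 + m3)))
def kC1 (p1 m2 m3 : ℝ) : ℝ :=
  (if p1 = 0 then 0 else m2 * m3 / (p1 + m2 + m3) * (1 / (m2 + p1) + 1 / (p1 + m3)))
def kC3 (p1 m2 p3 : ℝ) : ℝ :=
  (if p1 = 0 then 0 else 2 * m2 * p3 / ((p1 + m2) * (p1 + m2 + p3)))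
def kC4 (m1 m2 p3 : ℝ) : ℝ :=
  (if m1 = 0 then 0 else 2 * m2 * p3 / ((m1 + p3) * (m1 + m2 + p3)))

def S3 {n : ℕ} (T : Fin n ⊕ Fin n → Fin n ⊕ Fin n → Fin n ⊕ Fin n → ℂ)
    (f g h : Fin n ⊕ Fin n → ℂ) (k : Fin n ⊕ Fin n → Fin n ⊕ Fin n → Fin n ⊕ Fin n → ℝ) : ℂ :=
  ∑ a, ∑ b, ∑ c, (k a b c : ℂ) * T a b c * f a * g b * h c

lemma fn_E3P {n : ℕ} (q : ℕ) (lam : Fin n → ℝ)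
    (T : Fin n ⊕ Fin n → Fin n ⊕ Fin n → Fin n ⊕ Fin n → ℂ) (z w : Cn n) :
    fn (E3P q lam T) (z, w) =
      I / 6 * S3 T (fun v => Mv v z) (fun v => Mv v z) (fun v => Mv v z) (fun a b c =>
        kA (pW q lam a) (mW q lam a) (pW q lam b) (mW q lam b) (pW q lam c) (mW q lam c))
      + I / 2 * S3 T (fun v => Mv v z) (fun v => Mv v z) (fun v => Mv v w) (fun a b c =>
        kB1 (pW q lam a) (mW q lam a) (pW q lam b) (mW q lam b) (pW q lam c) (mW q lam c))
      - I / 2 * S3 T (fun v => Mv v z) (fun v => Mv v z) (fun v => Mv v w) (fun a b c =>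
        kB2 (pW q lam a) (mW q lam a) (pW q lam b) (mW q lam b) (pW q lam c) (mW q lam c))
      + I * S3 T (fun v => Mv v z) (fun v => Mv v w) (fun v => Mv v w) (fun a b c =>
        kC1 (pW q lam a) (mW q lam b) (mW q lam c))
      - I * S3 T (fun v => Mv v z) (fun v => Mv v w) (fun v => Mv v w) (fun a b c =>
        kC1 (mW q lam a) (pW q lam b) (pW q lam c))
      + I * S3 T (fun v => Mv v z) (fun v => Mv v w) (fun v => Mv v w) (fun a b c =>
        kC3 (pW q lam a) (mW q lam b) (pW q lam c))
      - I * S3 T (fun v => Mv v z) (fun v => Mv v w) (fun v => Mv v w) (fun a b c =>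
        kC4 (mW q lam a) (mW q lam b) (pW q lam c)) := by
  have hi : ∀ v : Fin n ⊕ Fin n, evalVars z w (iV v) = Mv v z := by
    rintro (v | v) <;> simp [evalVars, iV, Mv]
  have ho : ∀ v : Fin n ⊕ Fin n, evalVars z w (oV v) = Mv v w := by
    rintro (v | v) <;> simp [evalVars, oV, Mv]
  have hB : ∀ p1 m1 p2 m2 p3 m3, kB p1 m1 p2 m2 p3 m3 =
    kB1 p1 m1 p2 m2 p3 m3 - kB2 p1 m1 p2 m2 p3 m3 := fun _ _ _ _ _ _ => rfl
  have hC : ∀ p1 m1 p2 m2 p3 m3, kC p1 m1 p2 m2 p3 m3 =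
    kC1 p1 m2 m3 - kC1 m1 p2 p3 + kC3 p1 m2 p3 - kC4 m1 m2 p3 := fun _ _ _ _ _ _ => rfl
  simp only [S3, Finset.mul_sum, ← Finset.sum_add_distrib, ← Finset.sum_sub_distrib]
  simp only [fn, E3P, map_sum]
  refine Finset.sum_congr rfl fun a _ => Finset.sum_congr rfl fun b _ =>
    Finset.sum_congr rfl fun c _ => ?_
  simp only [eP, map_mul, map_add, MvPolynomial.eval_C, MvPolynomial.eval_X, hi, ho, hB, hC,
    ofReal_sub, ofReal_add]
  ring

set_option maxHeartbeats 4000000 in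
lemma E5_eq {n : ℕ} (q : ℕ) (lam : Fin n → ℝ)
    (hneg : ∀ j : Fin n, (j : ℕ) < q → lam j < 0)
    (hpos : ∀ j : Fin n, q ≤ (j : ℕ) → 0 < lam j) (φ : Cn n → ℝ) (z w : Cn n) :
    E5 q lam φ z w = (I * ∑ j, ((|lam j| * Complex.normSq (z j - w j) : ℝ) : ℂ)
          + I * ∑ j, ((lam j : ℝ) : ℂ) *
              ((starRingEnd ℂ) (z j) * w j - (starRingEnd ℂ) (w j) * z j))
      + fn (E3P q lam (fun a b c => Dv a (Dv b (Dv c (cplx φ))) 0)) (z, w) := by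
  have hl : ∀ j, lam j ≠ 0 := fun j => by
    rcases lt_or_ge (j : ℕ) q with h | h
    · exact (hneg j h).ne
    · exact (hpos j h).ne'
  rw [fn_E3P, E5]
  simp only [← add_assoc, ← add_sub_assoc]
  congr 1
  congr 1
  congr 1
  congr 1
  congr 1
  congr 1
  congr 1
  · congr 1
    simp only [S3]
    refine Finset.sum_congr rfl fun a _ => Finset.sum_congr rfl fun b _ =>
      Finset.sum_congr rfl fun c _ => ?_
    congr 4
    have hk : kA (pW q lam a) (mW q lam a) (pW q lam b) (mW q lam b) (pW q lam c) (mW q lam c) =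
        swgt q lam (aOf3 a b c) (bOf3 a b c) /
              (wA q lam (aOf3 a b c) + wB q lam (bOf3 a b c)) := by
      rw [sw3 q lam hneg hpos, wA3, wB3, kA]
      congr 1
      ring
    rw [hk]
    split_ifs with h
    · obtain ⟨h1, h2⟩ := cond0_zero q lam a b c h
      rw [h1, h2]; simp
    · rfl
  · congr 1
    simp only [S3]
    rw [Finset.sum_comm]
    refine Finset.sum_congr rfl fun a _ => ?_
    rw [Finset.sum_comm]
    refine Finset.sum_congr rfl fun b _ => ?_
    symm
    rw [Fintype.sum_sum_type, Finset.sum_eq_zero (fun j _ => by simp [kB1, mW]), zero_add]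
    refine Finset.sum_congr rfl fun j _ => ?_
    symm
    have hk : (if (j : ℕ) < q ∧ ¬ (∀ t : Fin n, q ≤ (t : ℕ) → aOf2 a b t = 0) then
          ((2 * |lam j| * wA q lam (aOf2 a b) /
              ((wA q lam (aOf2 a b) + wB q lam (bOf2 a b)) *
               (wA q lam (aOf2 a b) + wB q lam (bOf2 a b) + |lam j|)) : ℝ) : ℂ)
        else 0) = (kB1 (pW q lam a) (mW q lam a) (pW q lam b) (mW q lam b)
          (pW q lam (Sum.inr j)) (mW q lam (Sum.inr j)) : ℂ) := by
      by_cases h1 : (j : ℕ) < q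
      · by_cases h2 : (∀ t : Fin n, q ≤ (t : ℕ) → aOf2 a b t = 0)
        · have h3 : wA q lam (aOf2 a b) = 0 := by
            refine Finset.sum_eq_zero fun t _ => ?_
            split_ifs with ht
            · rw [h2 t ht]; simp
            · rfl
          rw [if_neg (fun h => h.2 h2), kB1, ← wA2, h3]
          simp
        · rw [if_pos ⟨h1, h2⟩, kB1, wA2, wB2]
          simp only [pW, mW, h1, if_true]
          congr 1
          ring
      · rw [if_neg (fun h => h1 h.1)]
        simp [kB1, mW, h1]
    rw [hk]
    rfl
  · congr 1
    simp only [S3]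
    rw [Finset.sum_comm]
    refine Finset.sum_congr rfl fun a _ => ?_
    rw [Finset.sum_comm]
    refine Finset.sum_congr rfl fun b _ => ?_
    symm
    rw [Fintype.sum_sum_type, add_comm, Finset.sum_eq_zero (fun j _ => by simp [kB2, pW]), zero_add]
    refine Finset.sum_congr rfl fun j _ => ?_
    symm
    have hk : (if q ≤ (j : ℕ) ∧ ¬ (∀ t : Fin n, (t : ℕ) < q → bOf2 a b t = 0) then
          ((2 * |lam j| * wB q lam (bOf2 a b) /
              ((wA q lam (aOf2 a b) + wB q lam (bOf2 a b)) *
               (wA q lam (aOf2 a b) + wB q lam (bOf2 a b) + |lam j|)) : ℝ) : ℂ)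
        else 0) = (kB2 (pW q lam a) (mW q lam a) (pW q lam b) (mW q lam b)
          (pW q lam (Sum.inl j)) (mW q lam (Sum.inl j)) : ℂ) := by
      by_cases h1 : q ≤ (j : ℕ)
      · by_cases h2 : (∀ t : Fin n, (t : ℕ) < q → bOf2 a b t = 0)
        · have h3 : wB q lam (bOf2 a b) = 0 := by
            refine Finset.sum_eq_zero fun t _ => ?_
            split_ifs with ht
            · rw [h2 t ht]; simp
            · rfl
          rw [if_neg (fun h => h.2 h2), kB2, ← wB2, h3]
          simp
        · rw [if_pos ⟨h1, h2⟩, kB2, wA2, wB2]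
          simp only [pW, mW, h1, if_true]
          congr 1
          ring
      · rw [if_neg (fun h => h1 h.1)]
        simp [kB2, pW, h1]
    rw [hk]
    rfl
  · congr 1
    simp only [S3, Fintype.sum_sum_type]
    simp only [kC1, pW, mW, Mv, Dv]
    simp [hl, ← ite_and]
    refine Finset.sum_congr rfl fun a _ => Finset.sum_congr rfl fun b _ =>
      Finset.sum_congr rfl fun c _ => ?_
    by_cases ha : q ≤ (a : ℕ) <;> by_cases hb : (b : ℕ) < q <;> by_cases hc : (c : ℕ) < q <;>
      simp [ha, hb, hc, not_le.1]
    simp [not_lt.2 ha]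
  · congr 1
    simp only [S3, Fintype.sum_sum_type]
    simp only [kC1, pW, mW, Mv, Dv]
    simp
    refine Finset.sum_congr rfl fun a _ => Finset.sum_congr rfl fun b _ =>
      Finset.sum_congr rfl fun c _ => ?_
    by_cases ha : (a : ℕ) < q <;> by_cases hb : q ≤ (b : ℕ) <;> by_cases hc : q ≤ (c : ℕ) <;>
      simp [ha, hb, hc, hl]
  · congr 1
    rw [Finset.sum_congr rfl fun _ _ => Finset.sum_comm]
    simp only [S3, Fintype.sum_sum_type]
    simp only [kC3, pW, mW, Mv, Dv]
    simp
    refine Finset.sum_congr rfl fun a _ => Finset.sum_congr rfl fun b _ =>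
      Finset.sum_congr rfl fun c _ => ?_
    by_cases ha : q ≤ (a : ℕ) <;> by_cases hb : (b : ℕ) < q <;> by_cases hc : q ≤ (c : ℕ) <;>
      simp [ha, hb, hc, hl]
    ring
  · congr 1
    rw [Finset.sum_congr rfl fun _ _ => Finset.sum_comm]
    rw [Finset.sum_comm]
    rw [Finset.sum_congr rfl fun _ _ => Finset.sum_comm]
    simp only [S3, Fintype.sum_sum_type]
    simp only [kC4, pW, mW, Mv, Dv]
    simp
    refine Finset.sum_congr rfl fun a _ => Finset.sum_congr rfl fun b _ =>
      Finset.sum_congr rfl fun c _ => ?_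
    by_cases ha : (a : ℕ) < q <;> by_cases hb : (b : ℕ) < q <;> by_cases hc : q ≤ (c : ℕ) <;>
      simp [ha, hb, hc, hl]
    ring

lemma Dv_part {n : ℕ} {F : EE n → ℂ} (hF : Sm F) (v : Fin n ⊕ Fin n) (p : EE n) :
    Dv v (fun x => F (x, p.2)) p.1 = DD (iV v) F p := by
  have h1 : HasFDerivAt (fun x : Cn n => ((x, p.2) : EE n))
      ((ContinuousLinearMap.id ℝ (Cn n)).prod (0 : Cn n →L[ℝ] Cn n)) p.1 :=
    (hasFDerivAt_id p.1).prodMk (hasFDerivAt_const p.2 p.1)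
  have h2 : fderiv ℝ (fun x => F (x, p.2)) p.1 = (fderiv ℝ F p).comp
      ((ContinuousLinearMap.id ℝ (Cn n)).prod (0 : Cn n →L[ℝ] Cn n)) :=
    ((hF.diff p).hasFDerivAt.comp p.1 h1).fderiv
  rcases v with j | j
  · simp only [Dv, wdb, h2, DD, LV_apply, iV]
    simp [dirV, sgV]
  · simp only [Dv, wd, h2, DD, LV_apply, iV]
    simp [dirV, sgV]
    ring

lemma Sm_fst {n : ℕ} {g : Cn n → ℂ} (hg : ContDiff ℝ (⊤ : ℕ∞) g) : Sm (fun p : EE n => g p.1) :=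
  hg.comp contDiff_fst

lemma DD_i_fst {n : ℕ} {g : Cn n → ℂ} (hg : ContDiff ℝ (⊤ : ℕ∞) g) (v : Fin n ⊕ Fin n) :
    DD (iV v) (fun p : EE n => g p.1) = fun p => Dv v g p.1 := by
  funext p
  exact (Dv_part (Sm_fst hg) v p).symm

lemma DD_o_fst {n : ℕ} {g : Cn n → ℂ} (hg : ContDiff ℝ (⊤ : ℕ∞) g) (v : Fin n ⊕ Fin n) :
    DD (oV v) (fun p : EE n => g p.1) = fun _ => 0 := by
  funext p
  have h2 : fderiv ℝ (fun p : EE n => g p.1) p = (fderiv ℝ g p.1).comp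
      (ContinuousLinearMap.fst ℝ (Cn n) (Cn n)) :=
    (((hg.differentiable (by simp)) p.1).hasFDerivAt.comp p hasFDerivAt_fst).fderiv
  rcases v with j | j <;> simp [DD, LV_apply, h2, dirV, oV]

lemma Sm_Dv {n : ℕ} {g : Cn n → ℂ} (hg : ContDiff ℝ (⊤ : ℕ∞) g) (v : Fin n ⊕ Fin n) :
    ContDiff ℝ (⊤ : ℕ∞) (Dv v g) := by
  have h : Dv v g = fun z => DD (iV v) (fun p : EE n => g p.1) (z, 0) := by
    rw [DD_i_fst hg]
  rw [h]
  exact ((Sm_fst hg).DD (iV v)).comp (contDiff_id.prodMk contDiff_const)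

lemma leib {n : ℕ} {A B : EE n → ℂ} (hA : Sm A) (hB : Sm B) (a0 : A 0 = 0) (b0 : B 0 = 0)
    (x y z : Var n) : DD x (DD y (DD z (fun p => A p * B p))) 0 =
      (DD x A 0 * DD y (DD z B) 0 + DD y A 0 * DD x (DD z B) 0 + DD z A 0 * DD x (DD y B) 0)
      + (DD x B 0 * DD y (DD z A) 0 + DD y B 0 * DD x (DD z A) 0 + DD z B 0 * DD x (DD y A) 0) := by
  have m : ∀ {f g : EE n → ℂ}, Sm f → Sm g → Sm (fun p => f p * g p) :=
    fun hf hg => ContDiff.mul hf hg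
  have ad : ∀ {f g : EE n → ℂ}, Sm f → Sm g → Sm (fun p => f p + g p) :=
    fun hf hg => ContDiff.add hf hg
  rw [DD_mul hA hB, DD_add (m (hA.DD z) hB) (m hA (hB.DD z)), DD_mul (hA.DD z) hB,
    DD_mul hA (hB.DD z),
    DD_add (ad (m ((hA.DD z).DD y) hB) (m (hA.DD z) (hB.DD y)))
      (ad (m (hA.DD y) (hB.DD z)) (m hA ((hB.DD z).DD y))),
    DD_add (m ((hA.DD z).DD y) hB) (m (hA.DD z) (hB.DD y)),
    DD_add (m (hA.DD y) (hB.DD z)) (m hA ((hB.DD z).DD y)),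
    DD_mul ((hA.DD z).DD y) hB, DD_mul (hA.DD z) (hB.DD y), DD_mul (hA.DD y) (hB.DD z),
    DD_mul hA ((hB.DD z).DD y)]
  simp only [a0, b0]
  ring

open MvPolynomial in
lemma cub_prod {n : ℕ} (a : Var n → ℂ) (b : Var n → Var n → ℂ) :
    cubP (fun x y z => a x * b y z + a y * b x z + a z * b x y) = linP a * quadP b := by
  have e1 : ∑ x, ∑ y, ∑ z, C (a x * b y z) * X x * X y * X z =
      linP a * ∑ x, ∑ y, C (b x y) * X x * X y := by
    rw [linP, Finset.sum_mul]
    refine Finset.sum_congr rfl fun x _ => ?_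
    rw [Finset.mul_sum]
    refine Finset.sum_congr rfl fun y _ => ?_
    rw [Finset.mul_sum]
    refine Finset.sum_congr rfl fun z _ => ?_
    rw [C_mul]; ring
  have e2 : ∑ x, ∑ y, ∑ z, C (a y * b x z) * X x * X y * X z =
      linP a * ∑ x, ∑ y, C (b x y) * X x * X y := by
    rw [← e1, Finset.sum_comm]
    refine Finset.sum_congr rfl fun x _ => Finset.sum_congr rfl fun y _ =>
      Finset.sum_congr rfl fun z _ => ?_
    ring
  have e3 : ∑ x, ∑ y, ∑ z, C (a z * b x y) * X x * X y * X z =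
      linP a * ∑ x, ∑ y, C (b x y) * X x * X y := by
    rw [← e2]
    refine Finset.sum_congr rfl fun x _ => ?_
    rw [Finset.sum_comm]
    refine Finset.sum_congr rfl fun y _ =>
      Finset.sum_congr rfl fun z _ => ?_
    ring
  have e4 : (C (1 / 2) : MvPolynomial (Var n) ℂ) = C (1 / 6) * 3 := by
    rw [show (3 : MvPolynomial (Var n) ℂ) = C 3 from (map_ofNat C 3).symm, ← C_mul]; norm_num
  simp only [cubP, quadP, C_add, add_mul, Finset.sum_add_distrib]
  rw [e1, e2, e3, e4]
  ring

open MvPolynomial in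
lemma cub_add {n : ℕ} (S T : Var n → Var n → Var n → ℂ) :
    cubP (fun x y z => S x y z + T x y z) = cubP S + cubP T := by
  simp only [cubP, C_add, add_mul, Finset.sum_add_distrib, mul_add]

open MvPolynomial in
lemma quad_lin {n : ℕ} (c : ℂ) (S T : Var n → Var n → ℂ) :
    quadP (fun x y => c * S x y + T x y) = C c * quadP S + quadP T := by
  simp only [quadP, C_add, add_mul, Finset.sum_add_distrib, mul_add, C_mul]
  congr 1
  simp only [Finset.mul_sum]
  refine Finset.sum_congr rfl fun x _ => Finset.sum_congr rfl fun y _ => ?_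
  ring

open MvPolynomial in
lemma cub_sum {n : ℕ} {ι : Type*} (s : Finset ι) (S : ι → Var n → Var n → Var n → ℂ) :
    cubP (fun x y z => ∑ i ∈ s, S i x y z) = ∑ i ∈ s, cubP (S i) := by
  classical
  induction s using Finset.induction_on with
  | empty => simp [cubP]
  | insert i s hi ih =>
    rw [Finset.sum_insert hi, ← ih, ← cub_add]
    simp only [Finset.sum_insert hi]

lemma cube_zero {n : ℕ} {A B : Fin n → EE n → ℂ} (hA : ∀ j, Sm (A j)) (hB : ∀ j, Sm (B j))
    (a0 : ∀ j, A j 0 = 0) (b0 : ∀ j, B j 0 = 0)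
    (h : ∀ x y z, DD x (DD y (DD z (fun p => ∑ j, A j p * B j p))) 0 = 0) :
    ∑ j, (linP (fun x => DD x (A j) 0) * quadP (fun x y => DD x (DD y (B j)) 0)
      + linP (fun x => DD x (B j) 0) * quadP (fun x y => DD x (DD y (A j)) 0)) = 0 := by
  have m : ∀ j, Sm (fun p => A j p * B j p) := fun j => ContDiff.mul (hA j) (hB j)
  simp only [← cub_prod, ← cub_add]
  rw [← cub_sum]
  have : (fun x y z => ∑ j, ((DD x (A j) 0 * DD y (DD z (B j)) 0 + DD y (A j) 0 * DD x (DD z (B j)) 0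
      + DD z (A j) 0 * DD x (DD y (B j)) 0)
      + (DD x (B j) 0 * DD y (DD z (A j)) 0 + DD y (B j) 0 * DD x (DD z (A j)) 0
      + DD z (B j) 0 * DD x (DD y (A j)) 0))) = fun _ _ _ => 0 := by
    funext x y z
    rw [← h x y z, DD_sum _ m, DD_sum _ (fun j => (m j).DD z), DD_sum _ (fun j => ((m j).DD z).DD y)]
    exact Finset.sum_congr rfl fun j _ => (leib (hA j) (hB j) (a0 j) (b0 j) x y z).symm
  rw [this]
  simp [cubP]

open MvPolynomial in
def Q2 {n : ℕ} (lam : Fin n → ℝ) : MvPolynomial (Var n) ℂ :=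
  ∑ j, (C (I * (|lam j| : ℝ)) * ((X (0, j) - X (2, j)) * (X (1, j) - X (3, j)))
    + C (I * (lam j : ℝ)) * (X (1, j) * X (2, j) - X (3, j) * X (0, j)))

open MvPolynomial in
def Qf {n : ℕ} (lam : Fin n → ℝ) : MvPolynomial (Var n) ℂ :=
  ∑ j, C ((lam j : ℝ) : ℂ) * (X (0, j) * X (1, j))

open MvPolynomial in
lemma Q2_hom {n : ℕ} (lam : Fin n → ℝ) : (Q2 lam).IsHomogeneous 2 := by
  have hx : ∀ x : Var n, (X x : MvPolynomial (Var n) ℂ).IsHomogeneous 1 := isHomogeneous_X ℂ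
  refine IsHomogeneous.sum _ _ _ fun j _ => IsHomogeneous.add ?_ ?_
  · exact (isHomogeneous_C _ _).mul (((hx _).sub (hx _)).mul ((hx _).sub (hx _)))
  · exact (isHomogeneous_C _ _).mul (((hx _).mul (hx _)).sub ((hx _).mul (hx _)))

open MvPolynomial in
lemma Qf_hom {n : ℕ} (lam : Fin n → ℝ) : (Qf lam).IsHomogeneous 2 := by
  have hx : ∀ x : Var n, (X x : MvPolynomial (Var n) ℂ).IsHomogeneous 1 := isHomogeneous_X ℂ
  refine IsHomogeneous.sum _ _ _ fun j _ => ?_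
  exact (isHomogeneous_C _ _).mul ((hx _).mul (hx _))

open MvPolynomial in
lemma hom2_D3 {n : ℕ} {P : MvPolynomial (Var n) ℂ} (h : P.IsHomogeneous 2) (x y z : Var n) :
    DD x (DD y (DD z (fn P))) 0 = 0 := by
  rw [DD_fn, DD_fn, DD_fn]
  have h1 : (pderiv y (pderiv z P)).IsHomogeneous 0 := (h.pderiv (i := z)).pderiv (i := y)
  rw [totalDegree_eq_zero_iff_eq_C.1 ((totalDegree_zero_iff_isHomogeneous _).2 h1)]
  simp [fn]

open MvPolynomial in
lemma hom1_0 {n : ℕ} {P : MvPolynomial (Var n) ℂ} (h : P.IsHomogeneous 1) :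
    fn P 0 = 0 := by
  have h2 : eval (0 : Var n → ℂ) P = 0 := by
    rw [eval_zero, constantCoeff_eq]
    exact h.coeff_eq_zero (by simp)
  have h0 : evalVars (0 : EE n).1 (0 : EE n).2 = 0 := by
    funext x; exact evalVars_zero x
  rw [fn, h0, h2]

open MvPolynomial in
lemma lin_back {n : ℕ} (c : ℂ) (a b : Var n) :
    linP (fun x => fn (pderiv x (C c * (X a - X b))) 0) = C c * (X a - X b) := by
  have : ∀ x, fn (pderiv x (C c * (X a - X b) : MvPolynomial (Var n) ℂ)) 0 =
      (if a = x then c else 0) - (if b = x then c else 0) := by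
    intro x
    simp only [pderiv_C_mul, map_sub, DX]
    split_ifs <;> simp [fn, Algebra.smul_def]
  simp only [this, linP, C_sub, sub_mul, Finset.sum_sub_distrib]
  simp [apply_ite C, mul_sub]

open MvPolynomial in
lemma Q2_D1 {n : ℕ} (lam : Fin n → ℝ) (j : Fin n) :
    C I * pderiv (1, j) (Q2 lam) + pderiv (1, j) (Qf lam) =
      C ((lam j - |lam j| : ℝ) : ℂ) * (X (0, j) - X (2, j)) := by
  have h1 : pderiv (1, j) (Q2 lam) = C (I * (|lam j| : ℝ)) * (X (0, j) - X (2, j))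
      + C (I * (lam j : ℝ)) * X (2, j) := by
    rw [Q2, map_sum, Finset.sum_eq_single j]
    · simp [pderiv_C_mul, DX, pderiv_mul, Algebra.smul_def]
    · intro b _ hb
      simp [pderiv_C_mul, DX, pderiv_mul, Algebra.smul_def, hb]
    · simp
  have h2 : pderiv (1, j) (Qf lam) = C ((lam j : ℝ) : ℂ) * X (0, j) := by
    rw [Qf, map_sum, Finset.sum_eq_single j]
    · simp [pderiv_C_mul, DX, pderiv_mul, Algebra.smul_def]
    · intro b _ hb
      simp [pderiv_C_mul, DX, pderiv_mul, Algebra.smul_def, hb]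
    · simp
  rw [h1, h2]
  have e : (C I * C I : MvPolynomial (Var n) ℂ) = -1 := by rw [← C_mul]; simp
  simp only [C_mul, ofReal_sub, C_sub]
  linear_combination (C ((|lam j| : ℝ) : ℂ) * (X (0, j) - X (2, j)) + C ((lam j : ℝ) : ℂ) * X (2, j)) * e

open MvPolynomial in
lemma Q2_D0 {n : ℕ} (lam : Fin n → ℝ) (j : Fin n) :
    C (-I) * pderiv (0, j) (Q2 lam) + pderiv (0, j) (Qf lam) =
      C ((lam j + |lam j| : ℝ) : ℂ) * (X (1, j) - X (3, j)) := by
  have h1 : pderiv (0, j) (Q2 lam) = C (I * (|lam j| : ℝ)) * (X (1, j) - X (3, j))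
      - C (I * (lam j : ℝ)) * X (3, j) := by
    rw [Q2, map_sum, Finset.sum_eq_single j]
    · simp [pderiv_C_mul, DX, pderiv_mul, Algebra.smul_def]
      ring
    · intro b _ hb
      simp [pderiv_C_mul, DX, pderiv_mul, Algebra.smul_def, hb]
    · simp
  have h2 : pderiv (0, j) (Qf lam) = C ((lam j : ℝ) : ℂ) * X (1, j) := by
    rw [Qf, map_sum, Finset.sum_eq_single j]
    · simp [pderiv_C_mul, DX, pderiv_mul, Algebra.smul_def]
    · intro b _ hb
      simp [pderiv_C_mul, DX, pderiv_mul, Algebra.smul_def, hb]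
    · simp
  rw [h1, h2]
  have e : (C I * C I : MvPolynomial (Var n) ℂ) = -1 := by rw [← C_mul]; simp
  simp only [C_mul, ofReal_add, C_add, C_neg]
  linear_combination (-C ((|lam j| : ℝ) : ℂ) * (X (1, j) - X (3, j)) + C ((lam j : ℝ) : ℂ) * X (3, j)) * e

lemma fn_Q2 {n : ℕ} (lam : Fin n → ℝ) (p : EE n) : fn (Q2 lam) p =
    (I * ∑ j, ((|lam j| * Complex.normSq (p.1 j - p.2 j) : ℝ) : ℂ)
          + I * ∑ j, ((lam j : ℝ) : ℂ) *
              ((starRingEnd ℂ) (p.1 j) * p.2 j - (starRingEnd ℂ) (p.2 j) * p.1 j)) := by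
  rw [Finset.mul_sum, Finset.mul_sum, ← Finset.sum_add_distrib, fn, Q2, map_sum]
  refine Finset.sum_congr rfl fun j _ => ?_
  simp [evalVars, ← Complex.mul_conj]
  ring

lemma fn_Qf {n : ℕ} (lam : Fin n → ℝ) (p : EE n) : fn (Qf lam) p =
    ((∑ j, lam j * Complex.normSq (p.1 j) : ℝ) : ℂ) := by
  rw [fn, Qf, map_sum, ofReal_sum]
  refine Finset.sum_congr rfl fun j _ => ?_
  simp [evalVars, ← Complex.mul_conj]

lemma jet_at {n : ℕ} {F : EE n → ℂ} (hF : Sm F) {P : MvPolynomial (Var n) ℂ}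
    (hP : P.IsHomogeneous 2)
    (h : (fun p => F p - fn P p) =O[nhds 0] fun p => ‖p‖ ^ 3) :
    (∀ x, DD x F 0 = 0) ∧
    (∀ x y, DD x (DD y F) 0 = fn (MvPolynomial.pderiv x (MvPolynomial.pderiv y P)) 0) := by
  have hS : Sm (fun p => F p - fn P p) := ContDiff.sub hF (Sm_fn P)
  obtain ⟨_, h1, h2⟩ := jet2 hS h
  constructor
  · intro x
    have := h1 x
    rw [DD_sub hF (Sm_fn P), DD_fn] at this
    have h3 : fn (MvPolynomial.pderiv x P) 0 = 0 := hom1_0 (hP.pderiv (i := x))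
    simp only [h3, sub_zero] at this
    exact this
  · intro x y
    have := h2 x y
    rw [DD_sub hF (Sm_fn P), DD_sub (hF.DD y) ((Sm_fn P).DD y), DD_fn, DD_fn] at this
    exact sub_eq_zero.1 this

lemma lam_sub {n : ℕ} (q : ℕ) (lam : Fin n → ℝ)
    (hneg : ∀ j : Fin n, (j : ℕ) < q → lam j < 0)
    (hpos : ∀ j : Fin n, q ≤ (j : ℕ) → 0 < lam j) (j : Fin n) :
    lam j - |lam j| = - 2 * mW q lam (Sum.inr j) ∧ lam j + |lam j| = 2 * pW q lam (Sum.inl j) := by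
  rcases lt_or_ge (j : ℕ) q with h | h
  · simp [mW, pW, h, not_le.2 h, abs_of_neg (hneg j h)]; ring
  · simp [mW, pW, h, not_lt.2 h, abs_of_pos (hpos j h)]; ring

open MvPolynomial in
lemma eik {n : ℕ} (q : ℕ) (lam : Fin n → ℝ)
    (hneg : ∀ j : Fin n, (j : ℕ) < q → lam j < 0)
    (hpos : ∀ j : Fin n, q ≤ (j : ℕ) → 0 < lam j)
    {F G : EE n → ℂ} (hF : Sm F) (hG : Sm G)
    (h1 : (fun p => F p - fn (Q2 lam) p) =O[nhds 0] fun p => ‖p‖ ^ 3)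
    (h2 : (fun p => G p - fn (Qf lam) p) =O[nhds 0] fun p => ‖p‖ ^ 3)
    (h3 : ∀ x y z, DD x (DD y (DD z (fun p => ∑ j, (I * DD (1, j) F p + DD (1, j) G p) *
      (-I * DD (0, j) F p + DD (0, j) G p)))) 0 = 0) :
    ∑ v, C (aW q lam v : ℂ) * YV v * quadP (fun x y => DD x (DD y (DD (iV v) F)) 0) =
    C I * ∑ v, C ((pW q lam v - mW q lam v : ℝ) : ℂ) * YV v *
      quadP (fun x y => DD x (DD y (DD (iV v) G)) 0) := by
  obtain ⟨F1, F2⟩ := jet_at hF (Q2_hom lam) h1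
  obtain ⟨G1, G2⟩ := jet_at hG (Qf_hom lam) h2
  have cm : ∀ (c : ℂ) {f : EE n → ℂ}, Sm f → Sm (fun p => c * f p) :=
    fun c f hf => ContDiff.mul contDiff_const hf
  have sm : ∀ (c : ℂ) (x : Var n), Sm (fun p => c * DD x F p + DD x G p) :=
    fun c x => ContDiff.add (cm c (hF.DD x)) (hG.DD x)
  have d1 : ∀ (c : ℂ) (x y : Var n), DD y (fun p => c * DD x F p + DD x G p) =
      fun p => c * DD y (DD x F) p + DD y (DD x G) p := by
    intro c x y
    rw [DD_add (cm c (hF.DD x)) (hG.DD x), DD_cmul (hF.DD x)]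
  have d2 : ∀ (c : ℂ) (x y z : Var n), DD z (DD y (fun p => c * DD x F p + DD x G p)) =
      fun p => c * DD z (DD y (DD x F)) p + DD z (DD y (DD x G)) p := by
    intro c x y z
    rw [d1, DD_add (cm c ((hF.DD x).DD y)) ((hG.DD x).DD y), DD_cmul ((hF.DD x).DD y)]
  have key := cube_zero (A := fun j p => I * DD (1, j) F p + DD (1, j) G p)
    (B := fun j p => -I * DD (0, j) F p + DD (0, j) G p) (fun j => sm I (1, j))
    (fun j => sm (-I) (0, j)) (fun j => by simp [F1, G1]) (fun j => by simp [F1, G1]) h3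
  have l0 : ∀ (c : ℂ) (x y : Var n), c * DD y (DD x F) 0 + DD y (DD x G) 0 =
      fn (pderiv y (C c * pderiv x (Q2 lam) + pderiv x (Qf lam))) 0 := by
    intro c x y
    rw [F2, G2, map_add, pderiv_C_mul, fn_add]
    simp [fn, smul_eval]
  simp only [d2] at key
  simp only [d1, l0, Q2_D1, Q2_D0, lin_back, quad_lin] at key
  rw [← sub_eq_zero, Fintype.sum_sum_type, Fintype.sum_sum_type]
  have e : (C I * C I : MvPolynomial (Var n) ℂ) = -1 := by rw [← C_mul]; simp
  have e2 : (C (2 : ℂ) : MvPolynomial (Var n) ℂ) = 2 := map_ofNat C 2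
  have e3 : (2 * C I : MvPolynomial (Var n) ℂ) ≠ 0 := by
    rw [← e2, ← C_mul, Ne, C_eq_zero]; simp
  apply (mul_eq_zero.1 _).resolve_left e3
  rw [← key]
  simp only [mul_add, mul_sub, Finset.mul_sum, ← Finset.sum_add_distrib, ← Finset.sum_sub_distrib]
  refine Finset.sum_congr rfl fun j _ => ?_
  obtain ⟨m1, m2⟩ := lam_sub q lam hneg hpos j
  rw [m1, m2]
  simp only [aW, YV, iV, oV]
  have p1 : pW q lam (Sum.inr j) = 0 := rfl
  have p2 : mW q lam (Sum.inl j) = 0 := rfl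
  rw [p1, p2]
  push_cast
  simp only [C_mul, C_neg, zero_sub, sub_zero, zero_add, add_zero, e2]
  set K1 := quadP (fun x y => DD x (DD y (DD (1, j) G)) 0)
  set K0 := quadP (fun x y => DD x (DD y (DD (0, j) G)) 0)
  linear_combination (-2 * C ((pW q lam (Sum.inl j) : ℝ) : ℂ) * (X (1, j) - X (3, j)) * K1 +
    2 * C ((mW q lam (Sum.inr j) : ℝ) : ℂ) * (X (0, j) - X (2, j)) * K0) * e

open MvPolynomial in
lemma quad_fst {n : ℕ} {g : Cn n → ℂ} (hg : ContDiff ℝ (⊤ : ℕ∞) g) (v : Fin n ⊕ Fin n) :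
    quadP (fun x y => DD x (DD y (DD (iV v) (fun p : EE n => g p.1))) 0) =
      C (1 / 2) * ∑ a, ∑ b, C (Dv a (Dv b (Dv v g)) 0) * X (iV a) * X (iV b) := by
  have hz : ∀ x : Var n, DD x (fun _ : EE n => (0 : ℂ)) = fun _ => 0 := fun x => DD_const 0 x
  simp only [quadP, sum_Var, DD_i_fst hg, DD_i_fst (Sm_Dv hg _), DD_o_fst (Sm_Dv hg _), hz,
    DD_i_fst (Sm_Dv (Sm_Dv hg _) _), DD_o_fst (Sm_Dv (Sm_Dv hg _) _)]
  simp

lemma Dv_comm {n : ℕ} {g : Cn n → ℂ} (hg : ContDiff ℝ (⊤ : ℕ∞) g) (a b : Fin n ⊕ Fin n) :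
    Dv a (Dv b g) = Dv b (Dv a g) := by
  funext z
  have := congrFun (DD_comm (Sm_fst hg) (iV a) (iV b)) (z, 0)
  rw [DD_i_fst hg, DD_i_fst hg, DD_i_fst (Sm_Dv hg _), DD_i_fst (Sm_Dv hg _)] at this
  exact this
/-- there is a homogeneous polynomial `R` of degree 3 in
`z, z̄, w, w̄`, each of whose monomials satisfies `(α'',β') = (0,0)`, with
`ψ(z,w) − E(z,w) − R(z,w) = O(|(z,w)|⁴)` at `(0,0)`. -/
theorem statement5 (n q : ℕ) (hn : 1 ≤ n) (hq : q ≤ n) (lam : Fin n → ℝ)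
    (hneg : ∀ j : Fin n, (j : ℕ) < q → lam j < 0)
    (hpos : ∀ j : Fin n, q ≤ (j : ℕ) → 0 < lam j)
    (φ : Cn n → ℝ) (hφ : PhiOK lam φ)
    (ψ : Cn n → Cn n → ℂ) (hψ : Admissible lam φ ψ) :
    ∃ R : MvPolynomial (Var n) ℂ,
      R.IsHomogeneous 3 ∧
      (∀ m ∈ R.support, ∀ j : Fin n,
        (q ≤ (j : ℕ) → m (zbV j) = 0) ∧ ((j : ℕ) < q → m (zV j) = 0)) ∧
      ((fun p : Cn n × Cn n =>
          ψ p.1 p.2 - E5 q lam φ p.1 p.2 - MvPolynomial.eval (evalVars p.1 p.2) R)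
        =O[nhds 0] fun p => ‖p‖ ^ 4) := by
  obtain ⟨hφs, hφO⟩ := hφ
  obtain ⟨hΨs, -, -, -, -, -, -, -, hd, he⟩ := hψ
  have hl : ∀ j, lam j ≠ 0 := fun j => by
    rcases lt_or_ge (j : ℕ) q with h | h
    · exact (hneg j h).ne
    · exact (hpos j h).ne'
  have hg : ContDiff ℝ (⊤ : ℕ∞) (cplx φ) := Complex.ofRealCLM.contDiff.comp hφs
  let F : EE n → ℂ := fun p => ψ p.1 p.2
  have hF : Sm F := hΨs
  let G : EE n → ℂ := fun p => cplx φ p.1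
  have hG : Sm G := Sm_fst hg
  have h1 : (fun p => F p - fn (Q2 lam) p) =O[nhds 0] fun p => ‖p‖ ^ 3 := by
    simp only [fn_Q2]
    exact he
  have h2 : (fun p => G p - fn (Qf lam) p) =O[nhds 0] fun p => ‖p‖ ^ 3 := by
    have ht : Filter.Tendsto (fun p : EE n => p.1) (nhds 0) (nhds 0) := continuous_fst.tendsto 0
    have h4 := hφO.comp_tendsto ht
    have h5 : (fun p : EE n => ‖p.1‖ ^ 3) =O[nhds 0] fun p => ‖p‖ ^ 3 := by
      refine IsBigO.of_bound 1 (Filter.Eventually.of_forall fun p => ?_)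
      rw [norm_pow, norm_pow, norm_norm, norm_norm, one_mul]
      exact pow_le_pow_left₀ (norm_nonneg _) (norm_fst_le p) 3
    have h6 := h4.trans h5
    refine IsBigO.of_norm_left ((IsBigO.norm_left h6).congr_left fun p => ?_)
    rw [fn_Qf]
    simp only [G, cplx, ← ofReal_sub, Complex.norm_real, Function.comp]
  have h3 : ∀ x y z, DD x (DD y (DD z (fun p => ∑ j, (I * DD (1, j) F p + DD (1, j) G p) *
      (-I * DD (0, j) F p + DD (0, j) G p)))) 0 = 0 := by
    have cm : ∀ (c : ℂ) (x : Var n), Sm (fun p => c * DD x F p + DD x G p) :=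
      fun c x => ContDiff.add (ContDiff.mul contDiff_const (hF.DD x)) (hG.DD x)
    refine flat3 (ContDiff.sum fun j _ => ContDiff.mul (cm I (1, j)) (cm (-I) (0, j))) fun m => ?_
    rw [← hd m 0]
    congr 1
    funext p
    refine Finset.sum_congr rfl fun j _ => ?_
    have a1 : wdb j (fun x => ψ x p.2) p.1 = DD (1, j) F p := Dv_part hF (Sum.inl j) p
    have a2 : wd j (fun x => ψ x p.2) p.1 = DD (0, j) F p := Dv_part hF (Sum.inr j) p
    have a3 : wdb j (cplx φ) p.1 = DD (1, j) G p := Dv_part hG (Sum.inl j) p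
    have a4 : wd j (cplx φ) p.1 = DD (0, j) G p := Dv_part hG (Sum.inr j) p
    rw [a1, a2, a3, a4]
  have key := eik q lam hneg hpos hF hG h1 h2 h3
  let f : EE n → ℂ := fun p => F p - fn (Q2 lam) p
  have hf : Sm f := ContDiff.sub hF (Sm_fn _)
  have hfF : ∀ x y z, DD x (DD y (DD z f)) 0 = DD x (DD y (DD z F)) 0 := by
    intro x y z
    rw [DD_sub hF (Sm_fn _), DD_sub (hF.DD z) ((Sm_fn _).DD z),
      DD_sub ((hF.DD z).DD y) (((Sm_fn _).DD z).DD y)]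
    simp only [hom2_D3 (Q2_hom lam), sub_zero]
  have ht := taylor3 hf h1
  simp only [hfF] at ht
  set S : Var n → Var n → Var n → ℂ := fun x y z => DD x (DD y (DD z F)) 0 with hS
  have hS1 : ∀ x y z, S x y z = S y x z := fun x y z => by
    simp only [hS]; rw [DD_comm (hF.DD z)]
  have hS2 : ∀ x y z, S x y z = S x z y := fun x y z => by
    simp only [hS]; rw [DD_comm hF]
  set T : Fin n ⊕ Fin n → Fin n ⊕ Fin n → Fin n ⊕ Fin n → ℂ :=
    fun a b c => Dv a (Dv b (Dv c (cplx φ))) 0 with hT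
  have hT1 : ∀ x y z, T x y z = T y x z := fun x y z => by
    simp only [hT]; rw [Dv_comm (Sm_Dv hg z)]
  have hT2 : ∀ x y z, T x y z = T x z y := fun x y z => by
    simp only [hT]; rw [Dv_comm hg]
  have hLD : LD q lam (cubP S - E3P q lam T) = 0 := by
    rw [map_sub, LD_E3P q lam hl T hT1 hT2, LD_apply, sub_eq_zero]
    have e1 : ∀ v, MvPolynomial.pderiv (iV v) (cubP S) =
        quadP (fun x y => DD x (DD y (DD (iV v) F)) 0) := fun v => by
      rw [pderiv_cub S hS1 hS2]
      congr 1
      funext x y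
      rw [hS1, hS2]
    simp only [e1]
    refine key.trans (congrArg (fun P => MvPolynomial.C I * P) ?_)
    refine Finset.sum_congr rfl fun v _ => ?_
    have e4 : ∀ a b, Dv a (Dv b (Dv v (cplx φ))) 0 = T v a b := fun a b => by
      rw [hT1, hT2]
    rw [quad_fst hg]
    simp only [e4]
  refine ⟨cubP S - E3P q lam T, (cubP_hom S).sub (E3P_hom q lam T), ?_, ?_⟩
  · intro m hm j
    constructor
    · intro hj
      refine kernel q lam _ hLD m hm (Sum.inl j) ?_
      simp [aW, pW, mW, hj, hl j]
    · intro hj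
      refine kernel q lam _ hLD m hm (Sum.inr j) ?_
      simp [aW, pW, mW, hj, hl j]
  · refine ht.congr_left fun p => ?_
    rw [E5_eq q lam hneg hpos φ p.1 p.2, ← fn_Q2 lam p]
    have e2 : MvPolynomial.eval (evalVars p.1 p.2) (cubP S - E3P q lam T) =
        fn (cubP S) p - fn (E3P q lam T) (p.1, p.2) := by
      simp [fn]
    rw [e2]
    show F p - fn (Q2 lam) p - fn (cubP S) p = F p - (fn (Q2 lam) p + fn (E3P q lam T) (p.1, p.2)) - _
    ring
end
end
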